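/- arXiv:2105.05848 — 4 statements merged into one kernel-verified Lean document; each statement's English description precedes it below -/
import Mathlib

section
/- Let X be a real Banach space, α ∈ (0,1), and t > 0. Let v : [0,t] → X be continuous with v(0) = 0, differentiable on the open interval (0,t), and suppose that s ↦ (t−s)^{−α}‖v′(s)‖ is integrable on (0,t). Then the function s ↦ α(t−s)^{−α−1}(v(t) − v(s)) is Bochner integrable on (0,t), and ∫_0^t (t−s)^{−α} v′(s) ds = t^{−α} v(t) + ∫_0^t α (t−s)^{−α−1} (v(t) − v(s)) ds. -/
open MeasureTheory Real

/-!
Write `v t - v s = ∫ r in s..t, v' r` and interchange the two integrals over the triangle `s < r`: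
the kernel `α (t - s) ^ (-α - 1)` is the derivative of `(t - s) ^ (-α)`, so its integral over
`a < s < r` is `(t - r) ^ (-α) - (t - a) ^ (-α)`. Since the kernel is nonnegative, the same
computation with norms shows that weighted integrability of `v'` is what Fubini's theorem requires.
-/

section Restrict

variable {ι : Type*} [LinearOrder ι] [TopologicalSpace ι] [OrderClosedTopology ι]
  [MeasurableSpace ι] [OpensMeasurableSpace ι] {μ : Measure ι} {a b c : ι}

theorem restrict_Ioo_restrict_Ioi (hac : a ≤ c) :
    (μ.restrict (Set.Ioo a b)).restrict (Set.Ioi c) = μ.restrict (Set.Ioo c b) := by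
  rw [Measure.restrict_restrict measurableSet_Ioi, Set.inter_comm, Set.Ioo_inter_Ioi,
    sup_eq_right.2 hac]

theorem restrict_Ioo_restrict_Iio (hcb : c ≤ b) :
    (μ.restrict (Set.Ioo a b)).restrict (Set.Iio c) = μ.restrict (Set.Ioo a c) := by
  rw [Measure.restrict_restrict measurableSet_Iio, Set.inter_comm, Set.Ioo_inter_Iio,
    min_eq_right hcb]

end Restrict

section Triangle

variable {ι 𝕜 E : Type*} [LinearOrder ι] [TopologicalSpace ι] [OrderClosedTopology ι]
  [MeasurableSpace ι] [OpensMeasurableSpace ι] [RCLike 𝕜]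
  [NormedAddCommGroup E] [NormedSpace ℝ E] [NormedSpace 𝕜 E]
  {μ ν : Measure ι} {g : ι → 𝕜} {f : ι → E}

theorem integral_indicator_lt_smul_right (s : ι) :
    ∫ r, {p : ι × ι | p.1 < p.2}.indicator (fun p ↦ g p.1 • f p.2) (s, r) ∂ν =
      g s • ∫ r in Set.Ioi s, f r ∂ν := by
  rw [← integral_smul, ← integral_indicator measurableSet_Ioi]
  rfl

theorem integral_indicator_lt_smul_left [CompleteSpace E] (r : ι) :
    ∫ s, {p : ι × ι | p.1 < p.2}.indicator (fun p ↦ g p.1 • f p.2) (s, r) ∂μ =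
      (∫ s in Set.Iio r, g s ∂μ) • f r := by
  rw [← integral_smul_const, ← integral_indicator measurableSet_Iio]
  rfl

variable [SecondCountableTopology ι] [SFinite μ] [SFinite ν]

theorem integrable_prod_indicator_lt_smul (hg : AEStronglyMeasurable g μ)
    (hf : AEStronglyMeasurable f ν) (hg_int : ∀ᵐ r ∂ν, IntegrableOn g (Set.Iio r) μ)
    (hgf : Integrable (fun r ↦ (∫ s in Set.Iio r, ‖g s‖ ∂μ) • f r) ν) :
    Integrable ({p : ι × ι | p.1 < p.2}.indicator fun p ↦ g p.1 • f p.2) (μ.prod ν) := by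
  have hmeas : AEStronglyMeasurable
      ({p : ι × ι | p.1 < p.2}.indicator fun p ↦ g p.1 • f p.2) (μ.prod ν) :=
    (hg.comp_fst.smul hf.comp_snd).indicator (measurableSet_lt measurable_fst measurable_snd)
  have hslice (r : ι) : (fun s ↦ {p : ι × ι | p.1 < p.2}.indicator (fun p ↦ g p.1 • f p.2) (s, r)) =
      (Set.Iio r).indicator fun s ↦ g s • f r := rfl
  refine (integrable_prod_iff' hmeas).2 ⟨?_, hgf.norm.congr (.of_forall fun r ↦ ?_)⟩
  · filter_upwards [hg_int] with r hr
    rw [hslice, integrable_indicator_iff measurableSet_Iio]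
    exact hr.smul_const (f r)
  · calc ‖(∫ s in Set.Iio r, ‖g s‖ ∂μ) • f r‖
        = ∫ s in Set.Iio r, ‖g s • f r‖ ∂μ := by
          simp only [norm_smul, integral_mul_const]
          rw [norm_of_nonneg (integral_nonneg fun _ ↦ norm_nonneg _)]
      _ = ∫ s, ‖(Set.Iio r).indicator (fun s ↦ g s • f r) s‖ ∂μ := by
          simp only [norm_indicator_eq_indicator_norm, integral_indicator measurableSet_Iio]

theorem integrable_smul_integral_Ioi (hg : AEStronglyMeasurable g μ)
    (hf : AEStronglyMeasurable f ν) (hg_int : ∀ᵐ r ∂ν, IntegrableOn g (Set.Iio r) μ)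
    (hgf : Integrable (fun r ↦ (∫ s in Set.Iio r, ‖g s‖ ∂μ) • f r) ν) :
    Integrable (fun s ↦ g s • ∫ r in Set.Ioi s, f r ∂ν) μ := by
  simpa only [integral_indicator_lt_smul_right] using
    (integrable_prod_indicator_lt_smul hg hf hg_int hgf).integral_prod_left

theorem integral_smul_integral_Ioi [CompleteSpace E] (hg : AEStronglyMeasurable g μ)
    (hf : AEStronglyMeasurable f ν) (hg_int : ∀ᵐ r ∂ν, IntegrableOn g (Set.Iio r) μ)
    (hgf : Integrable (fun r ↦ (∫ s in Set.Iio r, ‖g s‖ ∂μ) • f r) ν) :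
    ∫ s, g s • ∫ r in Set.Ioi s, f r ∂ν ∂μ = ∫ r, (∫ s in Set.Iio r, g s ∂μ) • f r ∂ν := by
  simpa only [integral_indicator_lt_smul_right, integral_indicator_lt_smul_left] using
    integral_integral_swap (f := fun s r ↦
      {p : ι × ι | p.1 < p.2}.indicator (fun p ↦ g p.1 • f p.2) (s, r))
      (integrable_prod_indicator_lt_smul hg hf hg_int hgf)

end Triangle

section Derivative

variable {E : Type*} [NormedAddCommGroup E] [NormedSpace ℝ E] [CompleteSpace E] {a b : ℝ}

theorem aestronglyMeasurable_of_forall_hasDerivAt {f f' : ℝ → E} {s : Set ℝ}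
    (hs : MeasurableSet s) (hf : ∀ x ∈ s, HasDerivAt f (f' x) x) :
    AEStronglyMeasurable f' (volume.restrict s) :=
  (aestronglyMeasurable_deriv f _).congr
    ((ae_restrict_mem hs).mono fun x hx ↦ (hf x hx).deriv)

theorem integral_Ioo_eq_sub_of_hasDerivAt {f f' : ℝ → E} (hab : a ≤ b)
    (hf : ContinuousOn f (Set.Icc a b)) (hf' : ∀ x ∈ Set.Ioo a b, HasDerivAt f (f' x) x)
    (hf'_int : IntegrableOn f' (Set.Ioo a b)) :
    ∫ x in Set.Ioo a b, f' x = f b - f a := by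
  rw [← integral_Ioc_eq_integral_Ioo, ← intervalIntegral.integral_of_le hab]
  exact intervalIntegral.integral_eq_sub_of_hasDerivAt_of_le hab hf hf'
    ((intervalIntegrable_iff_integrableOn_Ioo_of_le hab).2 hf'_int)

variable {k k' : ℝ → ℝ}

theorem integrableOn_Ioo_and_integral_eq_sub_of_hasDerivAt_nonneg (hab : a ≤ b)
    (hk : ContinuousOn k (Set.Icc a b)) (hk' : ∀ s ∈ Set.Ioo a b, HasDerivAt k (k' s) s)
    (hk'_nonneg : ∀ s ∈ Set.Ioo a b, 0 ≤ k' s) :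
    IntegrableOn k' (Set.Ioo a b) ∧ ∫ s in Set.Ioo a b, k' s = k b - k a := by
  have hk'_int : IntegrableOn k' (Set.Ioo a b) :=
    (intervalIntegral.integrableOn_deriv_of_nonneg hk hk' hk'_nonneg).mono_set
      Set.Ioo_subset_Ioc_self
  exact ⟨hk'_int, integral_Ioo_eq_sub_of_hasDerivAt hab hk hk' hk'_int⟩

theorem integrableOn_and_integral_deriv_smul_integral_Ioo {f : ℝ → E}
    (hk : ContinuousOn k (Set.Ico a b)) (hk' : ∀ s ∈ Set.Ioo a b, HasDerivAt k (k' s) s)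
    (hk'_nonneg : ∀ s ∈ Set.Ioo a b, 0 ≤ k' s)
    (hf : AEStronglyMeasurable f (volume.restrict (Set.Ioo a b)))
    (hkf_int : IntegrableOn (fun r ↦ (k r - k a) • f r) (Set.Ioo a b)) :
    IntegrableOn (fun s ↦ k' s • ∫ r in Set.Ioo s b, f r) (Set.Ioo a b) ∧
      ∫ s in Set.Ioo a b, k' s • ∫ r in Set.Ioo s b, f r =
        ∫ r in Set.Ioo a b, (k r - k a) • f r := by
  set μ : Measure ℝ := volume.restrict (Set.Ioo a b)
  have hmem : ∀ᵐ s ∂μ, s ∈ Set.Ioo a b := ae_restrict_mem measurableSet_Ioo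
  have hk'_left : ∀ r ∈ Set.Ioo a b,
      IntegrableOn k' (Set.Ioo a r) ∧ ∫ s in Set.Ioo a r, k' s = k r - k a := fun r hr ↦
    integrableOn_Ioo_and_integral_eq_sub_of_hasDerivAt_nonneg hr.1.le
      (hk.mono (Set.Icc_subset_Ico_right hr.2))
      (fun s hs ↦ hk' s ⟨hs.1, hs.2.trans hr.2⟩)
      (fun s hs ↦ hk'_nonneg s ⟨hs.1, hs.2.trans hr.2⟩)
  have hk'_meas : AEStronglyMeasurable k' μ :=
    aestronglyMeasurable_of_forall_hasDerivAt measurableSet_Ioo hk'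
  have hk'_int : ∀ᵐ r ∂μ, IntegrableOn k' (Set.Iio r) μ := by
    filter_upwards [hmem] with r hr
    rw [IntegrableOn, restrict_Ioo_restrict_Iio hr.2.le]
    exact (hk'_left r hr).1
  have hk'_norm : ∀ r, ∫ s in Set.Iio r, ‖k' s‖ ∂μ = ∫ s in Set.Iio r, k' s ∂μ := fun r ↦
    integral_congr_ae <| ae_restrict_of_ae <|
      hmem.mono fun s hs ↦ norm_of_nonneg (hk'_nonneg s hs)
  have htail : (fun s ↦ k' s • ∫ r in Set.Ioi s, f r ∂μ) =ᵐ[μ]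
      fun s ↦ k' s • ∫ r in Set.Ioo s b, f r :=
    hmem.mono fun s hs ↦ by simp only [restrict_Ioo_restrict_Ioi hs.1.le, μ]
  have hweight : (fun r ↦ (∫ s in Set.Iio r, k' s ∂μ) • f r) =ᵐ[μ] fun r ↦ (k r - k a) • f r :=
    hmem.mono fun r hr ↦ by
      simp only [restrict_Ioo_restrict_Iio hr.2.le, (hk'_left r hr).2, μ]
  have hk'f_int : Integrable (fun r ↦ (∫ s in Set.Iio r, ‖k' s‖ ∂μ) • f r) μ := by
    simp only [hk'_norm]
    exact hkf_int.congr hweight.symm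
  exact ⟨(integrable_smul_integral_Ioi hk'_meas hf hk'_int hk'f_int).congr htail,
    by rw [← integral_congr_ae htail, ← integral_congr_ae hweight,
      integral_smul_integral_Ioi hk'_meas hf hk'_int hk'f_int]⟩

variable {v v' : ℝ → E}

theorem integrableOn_smul_sub_and_integral_smul_deriv_eq (hab : a ≤ b)
    (hk : ContinuousOn k (Set.Ico a b)) (hk' : ∀ s ∈ Set.Ioo a b, HasDerivAt k (k' s) s)
    (hk'_nonneg : ∀ s ∈ Set.Ioo a b, 0 ≤ k' s)
    (hv : ContinuousOn v (Set.Icc a b)) (hv' : ∀ s ∈ Set.Ioo a b, HasDerivAt v (v' s) s)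
    (hv'_int : IntegrableOn v' (Set.Ioo a b))
    (hkv'_int : IntegrableOn (fun s ↦ k s • v' s) (Set.Ioo a b)) :
    IntegrableOn (fun s ↦ k' s • (v b - v s)) (Set.Ioo a b) ∧
      ∫ s in Set.Ioo a b, k s • v' s =
        k a • (v b - v a) + ∫ s in Set.Ioo a b, k' s • (v b - v s) := by
  have hftc : ∀ s ∈ Set.Ico a b, ∫ r in Set.Ioo s b, v' r = v b - v s := fun s hs ↦
    integral_Ioo_eq_sub_of_hasDerivAt hs.2.le (hv.mono (Set.Icc_subset_Icc_left hs.1))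
      (fun r hr ↦ hv' r ⟨hs.1.trans_lt hr.1, hr.2⟩)
      (hv'_int.mono_set (Set.Ioo_subset_Ioo_left hs.1))
  have hkav'_int : IntegrableOn (fun s ↦ k a • v' s) (Set.Ioo a b) := hv'_int.smul (k a)
  have hsub : (fun s ↦ (k s - k a) • v' s) = fun s ↦ k s • v' s - k a • v' s :=
    funext fun s ↦ sub_smul ..
  have htail : Set.EqOn (fun s ↦ k' s • ∫ r in Set.Ioo s b, v' r) (fun s ↦ k' s • (v b - v s))
      (Set.Ioo a b) := fun s hs ↦ by simp only [hftc s (Set.Ioo_subset_Ico_self hs)]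
  obtain ⟨hint, heq⟩ := integrableOn_and_integral_deriv_smul_integral_Ioo hk hk' hk'_nonneg
    hv'_int.aestronglyMeasurable (hsub ▸ hkv'_int.sub hkav'_int)
  refine ⟨hint.congr_fun htail measurableSet_Ioo, ?_⟩
  calc ∫ s in Set.Ioo a b, k s • v' s
      = k a • (∫ s in Set.Ioo a b, v' s) + ∫ s in Set.Ioo a b, (k s - k a) • v' s := by
        rw [hsub, integral_sub hkv'_int hkav'_int, integral_smul, add_sub_cancel]
    _ = k a • (v b - v a) + ∫ s in Set.Ioo a b, k' s • (v b - v s) := by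
        rw [integral_Ioo_eq_sub_of_hasDerivAt hab hv hv' hv'_int, ← heq,
          setIntegral_congr_fun measurableSet_Ioo htail]

end Derivative

section Weight

theorem integrable_of_integrable_mul_norm {Ω E : Type*} [MeasurableSpace Ω] {μ : Measure Ω}
    [NormedAddCommGroup E] {w : Ω → ℝ} {f : Ω → E} {c : ℝ} (hc : 0 < c) (hw : ∀ᵐ x ∂μ, c ≤ w x)
    (hf : AEStronglyMeasurable f μ) (hwf : Integrable (fun x ↦ w x * ‖f x‖) μ) :
    Integrable f μ := by
  refine (hwf.const_mul c⁻¹).mono' hf ?_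
  filter_upwards [hw] with x hx
  rw [← mul_assoc]
  exact le_mul_of_one_le_left (norm_nonneg _) ((one_le_inv_mul₀ hc).2 hx)

theorem integrable_smul_of_integrable_mul_norm {Ω E : Type*} [MeasurableSpace Ω] {μ : Measure Ω}
    [NormedAddCommGroup E] [NormedSpace ℝ E] {w : Ω → ℝ} {f : Ω → E}
    (hw_meas : AEStronglyMeasurable w μ) (hw : 0 ≤ᵐ[μ] w)
    (hf : AEStronglyMeasurable f μ) (hwf : Integrable (fun x ↦ w x * ‖f x‖) μ) :
    Integrable (fun x ↦ w x • f x) μ :=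
  hwf.mono' (hw_meas.smul hf) <| hw.mono fun x hx ↦ by rw [norm_smul, norm_of_nonneg hx]

theorem hasDerivAt_const_sub_rpow_neg {α t s : ℝ} (hst : s < t) :
    HasDerivAt (fun s ↦ (t - s) ^ (-α)) (α * (t - s) ^ (-α - 1)) s := by
  simpa using ((hasDerivAt_id s).const_sub t).rpow_const (p := -α) (.inl (sub_pos.2 hst).ne')

end Weight

theorem caputo_integration_by_parts_general
    {X : Type*} [NormedAddCommGroup X] [NormedSpace ℝ X] [CompleteSpace X]
    {α a t : ℝ} (hα : 0 ≤ α) (hat : a < t) {v v' : ℝ → X}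
    (hv_cont : ContinuousOn v (Set.Icc a t))
    (hderiv : ∀ s ∈ Set.Ioo a t, HasDerivAt v (v' s) s)
    (hint : IntegrableOn (fun s ↦ (t - s) ^ (-α) * ‖v' s‖) (Set.Ioo a t)) :
    IntegrableOn (fun s ↦ (α * (t - s) ^ (-α - 1)) • (v t - v s)) (Set.Ioo a t) ∧
      ∫ s in Set.Ioo a t, (t - s) ^ (-α) • v' s =
        (t - a) ^ (-α) • (v t - v a) +
          ∫ s in Set.Ioo a t, (α * (t - s) ^ (-α - 1)) • (v t - v s) := by
  have hv'_meas : AEStronglyMeasurable v' (volume.restrict (Set.Ioo a t)) :=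
    aestronglyMeasurable_of_forall_hasDerivAt measurableSet_Ioo hderiv
  have hw_meas : AEStronglyMeasurable (fun s ↦ (t - s) ^ (-α)) (volume.restrict (Set.Ioo a t)) :=
    Measurable.aestronglyMeasurable (by fun_prop)
  have hmem : ∀ᵐ s ∂volume.restrict (Set.Ioo a t), s ∈ Set.Ioo a t :=
    ae_restrict_mem measurableSet_Ioo
  refine integrableOn_smul_sub_and_integral_smul_deriv_eq hat.le
    (fun s hs ↦ (hasDerivAt_const_sub_rpow_neg hs.2).continuousAt.continuousWithinAt)
    (fun s hs ↦ hasDerivAt_const_sub_rpow_neg hs.2)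
    (fun s hs ↦ mul_nonneg hα (rpow_nonneg (sub_nonneg.2 hs.2.le) _)) hv_cont hderiv
    (integrable_of_integrable_mul_norm (rpow_pos_of_pos (sub_pos.2 hat) (-α)) ?_ hv'_meas hint)
    (integrable_smul_of_integrable_mul_norm hw_meas ?_ hv'_meas hint)
  · filter_upwards [hmem] with s hs
    exact rpow_le_rpow_of_nonpos (sub_pos.2 hs.2) (sub_le_sub_left hs.1.le t) (neg_nonpos.2 hα)
  · filter_upwards [hmem] with s hs
    exact rpow_nonneg (sub_nonneg.2 hs.2.le) _

/-- Integration-by-parts representation of the Caputo fractional derivative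
for Banach-space-valued functions vanishing at `0`. -/
theorem caputo_integration_by_parts
    {X : Type*} [NormedAddCommGroup X] [NormedSpace ℝ X] [CompleteSpace X]
    (α t : ℝ) (hα : α ∈ Set.Ioo (0 : ℝ) 1) (ht : 0 < t)
    (v v' : ℝ → X)
    (hv_cont : ContinuousOn v (Set.Icc 0 t))
    (hv0 : v 0 = 0)
    (hderiv : ∀ s ∈ Set.Ioo 0 t, HasDerivAt v (v' s) s)
    (hint : IntegrableOn (fun s => (t - s) ^ (-α) * ‖v' s‖) (Set.Ioo 0 t)) :
    IntegrableOn (fun s => (α * (t - s) ^ (-α - 1)) • (v t - v s)) (Set.Ioo 0 t) ∧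
    ∫ s in Set.Ioo 0 t, (t - s) ^ (-α) • v' s
      = t ^ (-α) • v t + ∫ s in Set.Ioo 0 t, (α * (t - s) ^ (-α - 1)) • (v t - v s) := by
  simpa only [sub_zero, hv0] using
    caputo_integration_by_parts_general hα.1.le ht hv_cont hderiv hint
end

section
/- Let α ∈ (0,1), β := 1−α, τ > 0, and t > 0. Define E₁ : [0,∞) → ℝ by E₁(0) := 0 and E₁(s) := max{τ, s}^{α−1} for s > 0, and define ρ(s) := s^{−β}(1 − (max{1−s, 0})^β) for s > 0. Then t^{−α} E₁(t) + ∫_0^t α (t−s)^{−α−1} (E₁(t) − E₁(s)) ds = t^{−1} ρ(τ/t), where the integral on the left-hand side converges. -/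
open MeasureTheory Real

/-!
For `t ≤ τ` the barrier is constant on `(0, t]` and the integral vanishes. For `τ < t` the integral
splits at `τ`. On `(0, τ)` only the kernel `α (t - s) ^ (-α - 1)`, the derivative of
`(t - s) ^ (-α)`, depends on `s`. On `(τ, t)` the integrand has the elementary primitive
`(t - s) ^ (-α) (t ^ α - s ^ α) / t`, because `s ↦ (s / (t - s)) ^ α / t` is a primitive of
`α (t - s) ^ (-α - 1) s ^ (α - 1)`. The difference `t ^ α - s ^ α` makes up for the singularity of
`(t - s) ^ (-α)` at `s = t`, so the boundary term at `t` is zero.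
-/

open Set

section Caputo

variable {α τ t a b s p : ℝ} {f : ℝ → ℝ}

/-- The integrand of the integrated-by-parts Caputo derivative of order `α` of `φ` at time `t`,
normalised so that the derivative is multiplied by `Γ(1 - α)`. -/
noncomputable def caputoIntegrand (α : ℝ) (φ : ℝ → ℝ) (t s : ℝ) : ℝ :=
  α * (t - s) ^ (-α - 1) * (φ t - φ s)

/-- The barrier function `E₁` at positive times. Its value `E₁ 0 = 0` is replaced by the limit at
`0`, which leaves all integrals unchanged and makes the function continuous. -/
noncomputable def caputoBarrier (α τ s : ℝ) : ℝ :=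
  max τ s ^ (α - 1)

theorem continuousOn_dslope_of_differentiableAt {𝕜 E : Type*} [NontriviallyNormedField 𝕜]
    [NormedAddCommGroup E] [NormedSpace 𝕜 E] {g : 𝕜 → E} {c : 𝕜} {S : Set 𝕜}
    (hg : ContinuousOn g S) (hc : DifferentiableAt 𝕜 g c) : ContinuousOn (dslope g c) S := by
  intro x hx
  rcases eq_or_ne x c with rfl | hxc
  · exact (continuousAt_dslope_same.2 hc).continuousWithinAt
  · exact (continuousWithinAt_dslope_of_ne hxc).2 (hg x hx)

theorem sub_rpow_mul_sub_eq_rpow_mul_dslope (hp : p + 1 ≠ 0) (f : ℝ → ℝ) (t s : ℝ) :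
    (t - s) ^ p * (f t - f s) = (t - s) ^ (p + 1) * dslope f t s := by
  rcases eq_or_ne s t with rfl | hst
  · simp [zero_rpow hp]
  · have hts : t - s ≠ 0 := sub_ne_zero.2 hst.symm
    rw [rpow_add_one hts, dslope_of_ne f hst, slope_comm, slope_def_field, mul_assoc,
      mul_div_cancel₀ _ hts]

theorem continuousOn_sub_rpow_neg_mul_sub {S : Set ℝ} (hα : α < 1) (hf : ContinuousOn f S)
    (hft : DifferentiableAt ℝ f t) :
    ContinuousOn (fun s ↦ (t - s) ^ (-α) * (f t - f s)) S := by
  simp only [sub_rpow_mul_sub_eq_rpow_mul_dslope (show -α + 1 ≠ 0 by linarith)]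
  refine ContinuousOn.mul ?_ (continuousOn_dslope_of_differentiableAt hf hft)
  exact ContinuousOn.rpow_const (by fun_prop) fun _ _ ↦ .inr (by linarith)

theorem caputoIntegrand_eq_mul_dslope (α : ℝ) (f : ℝ → ℝ) (t s : ℝ) :
    caputoIntegrand α f t s = α * (t - s) ^ (-α) * dslope f t s := by
  rcases eq_or_ne α 0 with rfl | hα
  · simp [caputoIntegrand]
  · rw [caputoIntegrand, mul_assoc, sub_rpow_mul_sub_eq_rpow_mul_dslope (by simpa using hα),
      sub_add_cancel, mul_assoc]

theorem intervalIntegrable_caputoIntegrand (hα : α < 1) (hf : ContinuousOn f (uIcc a b))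
    (hft : DifferentiableAt ℝ f t) : IntervalIntegrable (caputoIntegrand α f t) volume a b := by
  have h_sing : IntervalIntegrable (fun s ↦ (t - s) ^ (-α)) volume a b := by
    simpa using (intervalIntegral.intervalIntegrable_rpow' (a := t - a) (b := t - b)
      (show -1 < -α by linarith)).comp_sub_left t
  simp only [funext (caputoIntegrand_eq_mul_dslope α f t)]
  exact (h_sing.const_mul α).mul_continuousOn (continuousOn_dslope_of_differentiableAt hf hft)

theorem hasDerivAt_sub_rpow_neg (hst : s ≠ t) :
    HasDerivAt (fun s ↦ (t - s) ^ (-α)) (α * (t - s) ^ (-α - 1)) s := by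
  simpa using ((hasDerivAt_id s).const_sub t).rpow_const (p := -α) (.inl (sub_ne_zero.2 hst.symm))

theorem integral_mul_sub_rpow_neg_sub_one (ht : t ∉ uIcc a b) :
    ∫ s in a..b, α * (t - s) ^ (-α - 1) = (t - b) ^ (-α) - (t - a) ^ (-α) := by
  have h_ne : ∀ s ∈ uIcc a b, s ≠ t := fun s hs hst ↦ ht (hst ▸ hs)
  refine intervalIntegral.integral_eq_sub_of_hasDerivAt
    (fun s hs ↦ hasDerivAt_sub_rpow_neg (h_ne s hs)) (ContinuousOn.intervalIntegrable ?_)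
  exact continuousOn_const.mul <| ContinuousOn.rpow_const (by fun_prop)
    fun s hs ↦ .inl (sub_ne_zero.2 (h_ne s hs).symm)

theorem hasDerivAt_sub_rpow_neg_mul_rpow_sub_rpow (hs : s ≠ 0) (ht : t ≠ 0) (hst : s ≠ t) :
    HasDerivAt (fun s ↦ (t - s) ^ (-α) * (t ^ α - s ^ α))
      (t * caputoIntegrand α (fun x ↦ x ^ (α - 1)) t s) s := by
  have hts : t - s ≠ 0 := sub_ne_zero.2 hst.symm
  refine ((hasDerivAt_sub_rpow_neg hst).mul
    ((hasDerivAt_rpow_const (.inl hs)).const_sub (t ^ α))).congr_deriv ?_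
  simp only [caputoIntegrand, rpow_sub_one hs, rpow_sub_one ht, rpow_sub_one hts]
  field_simp
  ring

theorem integral_caputoIntegrand_rpow_sub_one (hα : α < 1) (ha : 0 < a) (hat : a ≤ t) :
    ∫ s in a..t, caputoIntegrand α (fun x ↦ x ^ (α - 1)) t s =
      -((t - a) ^ (-α) * (t ^ α - a ^ α) / t) := by
  have ht : 0 < t := ha.trans_le hat
  have h_cont (r : ℝ) : ContinuousOn (fun x : ℝ ↦ x ^ r) (Icc a t) :=
    continuousOn_id.rpow_const fun x hx ↦ .inl (ha.trans_le hx.1).ne'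
  have h_diff (r : ℝ) : DifferentiableAt ℝ (fun x : ℝ ↦ x ^ r) t :=
    differentiableAt_rpow_const_of_ne r ht.ne'
  have h_ftc : ∫ s in a..t, t * caputoIntegrand α (fun x ↦ x ^ (α - 1)) t s =
      (t - t) ^ (-α) * (t ^ α - t ^ α) - (t - a) ^ (-α) * (t ^ α - a ^ α) :=
    intervalIntegral.integral_eq_sub_of_hasDerivAt_of_le hat
      (continuousOn_sub_rpow_neg_mul_sub hα (h_cont α) (h_diff α))
      (fun _ hs ↦ hasDerivAt_sub_rpow_neg_mul_rpow_sub_rpow (ha.trans hs.1).ne' ht.ne' hs.2.ne)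
      ((intervalIntegrable_caputoIntegrand hα (by rw [uIcc_of_le hat]; exact h_cont _)
        (h_diff _)).const_mul t)
  rw [intervalIntegral.integral_const_mul, sub_self (t ^ α), mul_zero, zero_sub] at h_ftc
  rw [← neg_div, eq_div_iff ht.ne', mul_comm, h_ftc]

theorem caputoBarrier_of_le (hs : s ≤ τ) : caputoBarrier α τ s = τ ^ (α - 1) := by
  rw [caputoBarrier, max_eq_left hs]

theorem caputoBarrier_of_ge (hs : τ ≤ s) : caputoBarrier α τ s = s ^ (α - 1) := by
  rw [caputoBarrier, max_eq_right hs]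

theorem continuous_caputoBarrier (hτ : 0 < τ) : Continuous (caputoBarrier α τ) :=
  (continuous_const.max continuous_id).rpow_const fun _ ↦ .inl (lt_max_of_lt_left hτ).ne'

theorem differentiableAt_caputoBarrier (hτ : 0 < τ) (hτt : τ < t) :
    DifferentiableAt ℝ (caputoBarrier α τ) t :=
  (differentiableAt_rpow_const_of_ne (α - 1) (hτ.trans hτt).ne').congr_of_eventuallyEq <|
    (eventually_ge_nhds hτt).mono fun _ ↦ caputoBarrier_of_ge

theorem caputoIntegrand_caputoBarrier_eq_zero (hst : s ≤ t) (htτ : t ≤ τ) :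
    caputoIntegrand α (caputoBarrier α τ) t s = 0 := by
  rw [caputoIntegrand, caputoBarrier_of_le htτ, caputoBarrier_of_le (hst.trans htτ), sub_self,
    mul_zero]

theorem intervalIntegrable_caputoIntegrand_caputoBarrier (hα : α < 1) (hτ : 0 < τ) (hat : a ≤ t) :
    IntervalIntegrable (caputoIntegrand α (caputoBarrier α τ) t) volume a t := by
  rcases le_or_gt t τ with htτ | hτt
  · refine (intervalIntegrable_const (c := (0 : ℝ))).congr fun s hs ↦ ?_
    rw [uIoc_of_le hat] at hs
    exact (caputoIntegrand_caputoBarrier_eq_zero hs.2 htτ).symm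
  · exact intervalIntegrable_caputoIntegrand hα (continuous_caputoBarrier hτ).continuousOn
      (differentiableAt_caputoBarrier hτ hτt)

theorem integral_caputoIntegrand_caputoBarrier_of_le (hat : a ≤ t) (htτ : t ≤ τ) :
    ∫ s in a..t, caputoIntegrand α (caputoBarrier α τ) t s = 0 :=
  intervalIntegral.integral_zero_ae <| .of_forall fun _ hs ↦
    caputoIntegrand_caputoBarrier_eq_zero (uIoc_of_le hat ▸ hs).2 htτ

theorem integral_caputoIntegrand_caputoBarrier_of_lt (hα : α < 1) (hτ : 0 < τ) (hτt : τ < t) :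
    ∫ s in 0..t, caputoIntegrand α (caputoBarrier α τ) t s =
      ((t - τ) ^ (-α) - t ^ (-α)) * (t ^ (α - 1) - τ ^ (α - 1)) -
        (t - τ) ^ (-α) * (t ^ α - τ ^ α) / t := by
  have h_left : ∫ s in 0..τ, caputoIntegrand α (caputoBarrier α τ) t s =
      ((t - τ) ^ (-α) - t ^ (-α)) * (t ^ (α - 1) - τ ^ (α - 1)) := by
    have h_kernel : ∫ s in 0..τ, α * (t - s) ^ (-α - 1) = (t - τ) ^ (-α) - t ^ (-α) := by
      simpa using integral_mul_sub_rpow_neg_sub_one (a := 0) (b := τ)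
        (show t ∉ uIcc 0 τ by simp [uIcc_of_le hτ.le, hτt])
    rw [← h_kernel, ← intervalIntegral.integral_mul_const]
    refine intervalIntegral.integral_congr fun s hs ↦ ?_
    rw [uIcc_of_le hτ.le] at hs
    simp only [caputoIntegrand, caputoBarrier_of_ge hτt.le, caputoBarrier_of_le hs.2]
  have h_right : ∫ s in τ..t, caputoIntegrand α (caputoBarrier α τ) t s =
      -((t - τ) ^ (-α) * (t ^ α - τ ^ α) / t) := by
    rw [← integral_caputoIntegrand_rpow_sub_one hα hτ hτt.le]
    refine intervalIntegral.integral_congr fun s hs ↦ ?_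
    rw [uIcc_of_le hτt.le] at hs
    simp only [caputoIntegrand, caputoBarrier_of_ge hτt.le, caputoBarrier_of_ge hs.1]
  have h_int : IntervalIntegrable (caputoIntegrand α (caputoBarrier α τ) t) volume 0 t :=
    intervalIntegrable_caputoIntegrand_caputoBarrier hα hτ (hτ.trans hτt).le
  have hτ_mem : τ ∈ uIcc 0 t := by simp [uIcc_of_le (hτ.trans hτt).le, hτ.le, hτt.le]
  rw [← intervalIntegral.integral_add_adjacent_intervals
    (h_int.mono_set (uIcc_subset_uIcc_left hτ_mem))
    (h_int.mono_set (uIcc_subset_uIcc_right hτ_mem)), h_left, h_right, ← sub_eq_add_neg]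

theorem rpow_neg_mul_caputoBarrier_add_integral (hα : α < 1) (hτ : 0 < τ) (ht : 0 < t) :
    t ^ (-α) * caputoBarrier α τ t + ∫ s in 0..t, caputoIntegrand α (caputoBarrier α τ) t s =
      τ ^ (α - 1) * (t ^ (-α) - max (t - τ) 0 ^ (1 - α) / t) := by
  rcases le_or_gt t τ with htτ | hτt
  · rw [integral_caputoIntegrand_caputoBarrier_of_le ht.le htτ, caputoBarrier_of_le htτ,
      max_eq_right (sub_nonpos.2 htτ), zero_rpow (sub_pos.2 hα).ne']
    ring
  · have h_sub : (t - τ) ^ (1 - α) = (t - τ) * (t - τ) ^ (-α) := by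
      rw [mul_comm, ← rpow_add_one (sub_pos.2 hτt).ne', neg_add_eq_sub]
    rw [integral_caputoIntegrand_caputoBarrier_of_lt hα hτ hτt, caputoBarrier_of_ge hτt.le,
      max_eq_left (sub_pos.2 hτt).le, h_sub, rpow_sub_one hτ.ne', rpow_sub_one ht.ne']
    field_simp
    ring

theorem inv_mul_div_rpow_mul_one_sub (hτ : 0 ≤ τ) (ht : 0 < t) :
    t⁻¹ * ((τ / t) ^ (-(1 - α)) * (1 - max (1 - τ / t) 0 ^ (1 - α))) =
      τ ^ (α - 1) * (t ^ (-α) - max (t - τ) 0 ^ (1 - α) / t) := by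
  have h_max : max (1 - τ / t) 0 = max (t - τ) 0 / t := by
    rw [← max_div_div_right ht.le, zero_div, sub_div, div_self ht.ne']
  have h_neg : t ^ (-α) = (t ^ (α - 1))⁻¹ / t := by
    rw [← rpow_neg ht.le, ← rpow_sub_one ht.ne']
    ring_nf
  have h_one_sub : t ^ (1 - α) = (t ^ (α - 1))⁻¹ := by rw [← rpow_neg ht.le, neg_sub]
  rw [h_max, neg_sub, div_rpow hτ ht.le, div_rpow (le_max_right _ _) ht.le, h_neg, h_one_sub]
  field_simp

end Caputo

theorem caputo_barrier_E1_general {α β τ t : ℝ} (hα : α < 1) (hβ : β = 1 - α) (hτ : 0 < τ)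
    (ht : 0 < t) {E₁ : ℝ → ℝ} (hE₁ : ∀ s : ℝ, 0 < s → E₁ s = max τ s ^ (α - 1))
    {ρ : ℝ → ℝ} (hρ : ∀ s : ℝ, 0 < s → ρ s = s ^ (-β) * (1 - max (1 - s) 0 ^ β)) :
    IntegrableOn (caputoIntegrand α E₁ t) (Ioo 0 t) ∧
    t ^ (-α) * E₁ t + ∫ s in Ioo 0 t, caputoIntegrand α E₁ t s = t⁻¹ * ρ (τ / t) := by
  have h_congr : EqOn (caputoIntegrand α E₁ t) (caputoIntegrand α (caputoBarrier α τ) t)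
      (Ioo 0 t) := fun s hs ↦ by
    simp only [caputoIntegrand, caputoBarrier, hE₁ t ht, hE₁ s hs.1]
  constructor
  · rw [integrableOn_congr_fun h_congr measurableSet_Ioo,
      ← intervalIntegrable_iff_integrableOn_Ioo_of_le ht.le]
    exact intervalIntegrable_caputoIntegrand_caputoBarrier hα hτ ht.le
  · rw [setIntegral_congr_fun measurableSet_Ioo h_congr, ← integral_Ioc_eq_integral_Ioo,
      ← intervalIntegral.integral_of_le ht.le, hE₁ t ht, hρ _ (div_pos hτ ht), hβ,
      inv_mul_div_rpow_mul_one_sub hτ.le ht]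
    exact rpow_neg_mul_caputoBarrier_add_integral hα hτ ht

/-- The Caputo derivative (in integrated-by-parts form) of the barrier function
`E₁(t) = max{τ, t}^(α-1)` (with `E₁(0) = 0`) equals `t⁻¹ ρ(τ/t)`, where
`ρ(s) = s^(-β) (1 - ((1-s)⁺)^β)` and `β = 1 - α`. -/
theorem caputo_barrier_E1 (α β τ t : ℝ) (hα : α ∈ Set.Ioo (0 : ℝ) 1) (hβ : β = 1 - α)
    (hτ : 0 < τ) (ht : 0 < t)
    (E₁ : ℝ → ℝ) (hE₁0 : E₁ 0 = 0)
    (hE₁ : ∀ s : ℝ, 0 < s → E₁ s = max τ s ^ (α - 1))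
    (ρ : ℝ → ℝ) (hρ : ∀ s : ℝ, 0 < s → ρ s = s ^ (-β) * (1 - max (1 - s) 0 ^ β)) :
    IntegrableOn (fun s => α * (t - s) ^ (-α - 1) * (E₁ t - E₁ s)) (Set.Ioo 0 t) ∧
    t ^ (-α) * E₁ t + ∫ s in Set.Ioo 0 t, α * (t - s) ^ (-α - 1) * (E₁ t - E₁ s)
      = t⁻¹ * ρ (τ / t) :=
  caputo_barrier_E1_general hα.2 hβ hτ ht hE₁ hρ
end

section
/- Let α ∈ (0,1), β := 1−α, and let 0 < τ < t. Then β ∫_τ^t s^{−β−1} (t−s)^{−α} ds = τ^{−β} (t−τ)^β / t. -/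
open MeasureTheory Real

/-!
The derivative of `s ^ a * (t - s) ^ b` is `s ^ (a - 1) * (t - s) ^ (b - 1)` times the affine factor
`a * (t - s) - b * s`. For `a = -β` and `b = β` this factor is the constant `-(β * t)`, so the
integrand has the elementary primitive `-(s ^ (-β) * (t - s) ^ β) / (β * t)`, which vanishes at the
singular endpoint `s = t`.
-/

section RpowMulSubRpow

variable {a b c d t x β : ℝ}

lemma hasDerivAt_rpow_mul_sub_rpow (hx : x ≠ 0) (hxt : x ≠ t) :
    HasDerivAt (fun s ↦ s ^ a * (t - s) ^ b)
      (x ^ (a - 1) * (t - x) ^ (b - 1) * (a * (t - x) - b * x)) x := by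
  have htx : t - x ≠ 0 := sub_ne_zero.2 hxt.symm
  have hleft : HasDerivAt (fun s : ℝ ↦ s ^ a) (a * x ^ (a - 1)) x :=
    hasDerivAt_rpow_const (.inl hx)
  have hright : HasDerivAt (fun s ↦ (t - s) ^ b) (-1 * b * (t - x) ^ (b - 1)) x :=
    ((hasDerivAt_id x).const_sub t).rpow_const (.inl htx)
  refine (hleft.mul hright).congr_deriv ?_
  rw [rpow_sub_one hx, rpow_sub_one htx]
  field_simp
  ring

lemma continuousOn_rpow_mul_sub_rpow (hb : 0 ≤ b) :
    ContinuousOn (fun s ↦ s ^ a * (t - s) ^ b) {0}ᶜ :=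
  (continuousOn_id.rpow_const fun _ hs ↦ .inl hs).mul
    ((continuousOn_const.sub continuousOn_id).rpow_const fun _ _ ↦ .inr hb)

lemma intervalIntegrable_rpow_mul_sub_rpow (hcd : 0 ∉ Set.uIcc c d) (hb : -1 < b) :
    IntervalIntegrable (fun s ↦ s ^ a * (t - s) ^ b) volume c d := by
  have hsing : IntervalIntegrable (fun s ↦ (t - s) ^ b) volume c d := by
    simpa using (intervalIntegral.intervalIntegrable_rpow' hb
      (a := t - c) (b := t - d)).comp_sub_left t
  exact hsing.continuousOn_mul <|
    continuousOn_id.rpow_const fun s hs ↦ .inl (ne_of_mem_of_not_mem hs hcd)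

lemma integral_rpow_neg_sub_one_mul_sub_rpow_sub_one (hβ : 0 < β) (hcd : 0 ∉ Set.uIcc c d) :
    β * t * ∫ s in c..d, s ^ (-β - 1) * (t - s) ^ (β - 1) =
      c ^ (-β) * (t - c) ^ β - d ^ (-β) * (t - d) ^ β := by
  have hcont : ContinuousOn (fun s ↦ s ^ (-β) * (t - s) ^ β) (Set.uIcc c d) :=
    (continuousOn_rpow_mul_sub_rpow hβ.le).mono (Set.subset_compl_singleton_iff.2 hcd)
  have hderiv : ∀ s ∈ Set.Ioo (min c d) (max c d) \ {t},
      HasDerivAt (fun s ↦ s ^ (-β) * (t - s) ^ β)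
        (-(β * t) * (s ^ (-β - 1) * (t - s) ^ (β - 1))) s := fun s ⟨hs, hst⟩ ↦
    (hasDerivAt_rpow_mul_sub_rpow
      (ne_of_mem_of_not_mem (Set.Ioo_subset_Icc_self hs) hcd) hst).congr_deriv (by ring)
  have hint : IntervalIntegrable (fun s ↦ -(β * t) * (s ^ (-β - 1) * (t - s) ^ (β - 1)))
      volume c d :=
    (intervalIntegrable_rpow_mul_sub_rpow hcd (by linarith)).const_mul _
  have hftc := integral_eq_of_hasDerivAt_off_countable _ _ (Set.countable_singleton t)
    hcont hderiv hint
  rw [intervalIntegral.integral_const_mul] at hftc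
  linarith

end RpowMulSubRpow

theorem barrier_integral_eval_general (β τ t : ℝ) (hβ : 0 < β) (hτ : 0 < τ) (hτt : τ ≤ t) :
    β * ∫ s in Set.Ioo τ t, s ^ (-β - 1) * (t - s) ^ (β - 1)
      = τ ^ (-β) * (t - τ) ^ β / t := by
  have ht : 0 < t := hτ.trans_le hτt
  have h_zero : 0 ∉ Set.uIcc τ t := Set.notMem_uIcc_of_lt hτ ht
  rw [← integral_Ioc_eq_integral_Ioo, ← intervalIntegral.integral_of_le hτt, eq_div_iff ht.ne',
    mul_right_comm, integral_rpow_neg_sub_one_mul_sub_rpow_sub_one hβ h_zero,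
    sub_self t, zero_rpow hβ.ne', mul_zero, sub_zero]

/-- Explicit evaluation of the integral underlying the Caputo derivative of the
barrier function `max{τ, t}^(α-1)`: for `β = 1 - α` and `0 < τ < t`,
`β ∫_τ^t s^(-β-1) (t-s)^(-α) ds = τ^(-β) (t-τ)^β / t`. -/
theorem barrier_integral_eval (α β τ t : ℝ) (hα : α ∈ Set.Ioo (0 : ℝ) 1) (hβ : β = 1 - α)
    (hτ : 0 < τ) (hτt : τ < t) :
    β * ∫ s in Set.Ioo τ t, s ^ (-β - 1) * (t - s) ^ (-α)
      = τ ^ (-β) * (t - τ) ^ β / t := by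
  rw [show -α = β - 1 by linarith]
  exact barrier_integral_eval_general β τ t (by linarith [hα.2]) hτ hτt.le
end

section
/- Let α ∈ (0,1), λ ∈ ℝ, and T > 0. Let φ : [0,T] → ℝ be continuous, nonnegative, with φ(0) = 0, and Lipschitz continuous on [ε, T] for every ε ∈ (0,T). Let r : (0,T] → ℝ be nonnegative and continuous, with s ↦ (t−s)^{α−1} E_{α,α}(−λ(t−s)^α) r(s) integrable on (0,t) for every t ∈ (0,T]. Suppose that for every t ∈ (0,T]: (1/Γ(1−α)) ( t^{−α} φ(t) + ∫_0^t α (t−s)^{−α−1} (φ(t) − φ(s)) ds ) + λ φ(t) ≤ r(t). Then for every t ∈ (0,T]: φ(t) ≤ ∫_0^t (t−s)^{α−1} E_{α,α}(−λ(t−s)^α) r(s) ds. -/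
open MeasureTheory Real

/-- The generalized Mittag-Leffler function `E_{a,b}(z) = ∑_{k≥0} z^k / Γ(ak + b)`. -/
noncomputable def mittagLeffler (a b z : ℝ) : ℝ := ∑' k : ℕ, z ^ k / Real.Gamma (a * k + b)

/-!
Write `k_b(t) = t^(b-1) / Γ(b)` for the Riemann–Liouville kernels, so that `k_a ∗ k_b = k_(a+b)`,
and `S(t) = t^(α-1) E_{α,α}(-λ t^α)`. The integrated-by-parts Caputo derivative of `φ` is the right
derivative of `k_(1-α) ∗ φ`, so the hypothesis says that `G = k_1 ∗ (r - λ φ) - k_(1-α) ∗ φ`, which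
vanishes at the origin, is nondecreasing. The identity `k_(1-α) ∗ S = k_1 - λ k_1 ∗ S` gives
`S ∗ G = k_1 ∗ (S ∗ r - φ)`. Since `S` is positive, the left-hand side is nondecreasing, and
differentiating the right-hand side yields `S ∗ r - φ ≥ 0`.

For `λ > 0`, positivity of `S` comes from the equation `S = k_α - λ k_α ∗ S` and the inequality
`k_α(t₀ - s) k_α(t) ≤ k_α(t₀) k_α(t - s)`: together they bound `S` from above just before a first
zero `t₀` by a small multiple of its own maximum there.
-/

open Set Filter Topology Convolution

/-- Functions on `(0, T]` with an integrable singularity at the origin. They are closed under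
`halfLineConv`, and convolution identities between them hold at every point, not just almost
everywhere. -/
structure WeaklySingular (T : ℝ) (f : ℝ → ℝ) : Prop where
  continuousOn : ContinuousOn f (Ioc 0 T)
  integrableOn : IntegrableOn f (Ioc 0 T)

/-- The Laplace-type convolution `(f ∗₊ g)(x) = ∫_0^x f(x - s) g(s) ds`. -/
noncomputable def halfLineConv (f g : ℝ → ℝ) (x : ℝ) : ℝ := ∫ s in Ioo 0 x, f (x - s) * g s

local infixl:70 " ∗₊ " => halfLineConv

section halfLineConv

variable {f g h : ℝ → ℝ} {T x : ℝ}

lemma intervalIntegral_eq_setIntegral_Ioo (hx : 0 ≤ x) :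
    ∫ s in 0..x, f s = ∫ s in Ioo 0 x, f s := by
  rw [intervalIntegral.integral_of_le hx, integral_Ioc_eq_integral_Ioo]

lemma halfLineConv_of_nonpos (hx : x ≤ 0) : (f ∗₊ g) x = 0 := by
  rw [halfLineConv, Ioo_eq_empty hx.not_gt, setIntegral_empty]

lemma halfLineConv_comm (f g : ℝ → ℝ) : f ∗₊ g = g ∗₊ f := by
  ext x
  rcases le_or_gt x 0 with hx | hx
  · rw [halfLineConv_of_nonpos hx, halfLineConv_of_nonpos hx]
  · have hswap := intervalIntegral.integral_comp_sub_left
      (fun s => g (x - s) * f s) x (a := 0) (b := x)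
    simp only [sub_sub_cancel, sub_self, sub_zero] at hswap
    simp only [halfLineConv, ← intervalIntegral_eq_setIntegral_Ioo hx.le]
    rw [← hswap]
    simp only [mul_comm]

lemma halfLineConv_congr {f₁ f₂ g₁ g₂ : ℝ → ℝ} (hf : EqOn f₁ f₂ (Ioo 0 x))
    (hg : EqOn g₁ g₂ (Ioo 0 x)) : (f₁ ∗₊ g₁) x = (f₂ ∗₊ g₂) x :=
  setIntegral_congr_fun measurableSet_Ioo fun s hs => by
    simp only [hf ⟨sub_pos.2 hs.2, sub_lt_self x hs.1⟩, hg hs]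

lemma halfLineConv_integrand_eq_indicator (hf : ∀ t ≤ 0, f t = 0) (hg : ∀ t ≤ 0, g t = 0) (x : ℝ) :
    (fun s => f (x - s) * g s) = (Ioo 0 x).indicator fun s => f (x - s) * g s := by
  ext s
  by_cases hs : s ∈ Ioo 0 x
  · rw [indicator_of_mem hs]
  · rw [indicator_of_notMem hs]
    rcases le_or_gt s 0 with h0 | h0
    · rw [hg s h0, mul_zero]
    · rw [hf _ (sub_nonpos.2 (le_of_not_gt fun h => hs ⟨h0, h⟩)), zero_mul]

lemma halfLineConv_eq_convolution (hf : ∀ t ≤ 0, f t = 0) (hg : ∀ t ≤ 0, g t = 0) :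
    f ∗₊ g = (f ⋆[ContinuousLinearMap.mul ℝ ℝ] g) := by
  ext x
  rw [convolution_mul_swap, halfLineConv_integrand_eq_indicator hf hg,
    integral_indicator measurableSet_Ioo, halfLineConv]

lemma indicator_Ioc_of_nonpos (f : ℝ → ℝ) (T : ℝ) : ∀ t ≤ 0, (Ioc 0 T).indicator f t = 0 :=
  fun _ ht => indicator_of_notMem (fun h => ht.not_gt h.1) f

lemma eqOn_indicator_Ioc (f : ℝ → ℝ) (hx : x ≤ T) : EqOn f ((Ioc 0 T).indicator f) (Ioo 0 x) :=
  fun _ ht => (indicator_of_mem (mem_Ioc.2 ⟨ht.1, ht.2.le.trans hx⟩) f).symm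

lemma halfLineConv_indicator (hx : x ≤ T) :
    ((Ioc 0 T).indicator f ∗₊ (Ioc 0 T).indicator g) x = (f ∗₊ g) x :=
  (halfLineConv_congr (eqOn_indicator_Ioc f hx) (eqOn_indicator_Ioc g hx)).symm

namespace WeaklySingular

lemma of_continuousOn (hf : ContinuousOn f (Icc 0 T)) : WeaklySingular T f :=
  ⟨hf.mono Ioc_subset_Icc_self, hf.integrableOn_Icc.mono_set Ioc_subset_Icc_self⟩

lemma abs (hf : WeaklySingular T f) : WeaklySingular T |f| :=
  ⟨hf.continuousOn.abs, hf.integrableOn.abs⟩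

lemma add (hf : WeaklySingular T f) (hg : WeaklySingular T g) : WeaklySingular T (f + g) :=
  ⟨hf.continuousOn.add hg.continuousOn, hf.integrableOn.add hg.integrableOn⟩

lemma sub (hf : WeaklySingular T f) (hg : WeaklySingular T g) : WeaklySingular T (f - g) :=
  ⟨hf.continuousOn.sub hg.continuousOn, hf.integrableOn.sub hg.integrableOn⟩

lemma smul (c : ℝ) (hf : WeaklySingular T f) : WeaklySingular T (c • f) :=
  ⟨hf.continuousOn.const_smul c, hf.integrableOn.smul c⟩

lemma integrableOn_conv_left (hf : ContinuousOn f (Ioc 0 T)) (hg : IntegrableOn g (Ioc 0 T))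
    (hx : x ∈ Ioc 0 T) : IntegrableOn (fun s => f (x - s) * g s) (Ioc 0 (x / 2)) := by
  have hcont : ContinuousOn (fun s => f (x - s)) (Icc 0 (x / 2)) :=
    hf.comp (by fun_prop) fun s hs => ⟨by linarith [hs.2, hx.1], by linarith [hs.1, hx.2]⟩
  refine IntegrableOn.mono_set (IntegrableOn.continuousOn_mul hcont ?_ isCompact_Icc)
    Ioc_subset_Icc_self
  rw [integrableOn_Icc_iff_integrableOn_Ioc]
  exact hg.mono_set (Ioc_subset_Ioc_right (by linarith [hx.1, hx.2]))

lemma intervalIntegrable_conv_left (hf : ContinuousOn f (Ioc 0 T)) (hg : IntegrableOn g (Ioc 0 T))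
    (hx : x ∈ Ioc 0 T) : IntervalIntegrable (fun s => f (x - s) * g s) volume 0 (x / 2) :=
  (intervalIntegrable_iff_integrableOn_Ioc_of_le (by linarith [hx.1])).2
    (integrableOn_conv_left hf hg hx)

lemma intervalIntegrable_conv_right (hf : WeaklySingular T f) (hg : WeaklySingular T g)
    (hx : x ∈ Ioc 0 T) : IntervalIntegrable (fun s => f (x - s) * g s) volume (x / 2) x := by
  have := (intervalIntegrable_conv_left hg.continuousOn hf.integrableOn hx).comp_sub_left x
  simp only [sub_sub_cancel, sub_zero, sub_half] at this
  exact (this.congr fun s _ => mul_comm _ _).symm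

lemma integrableOn_conv (hf : WeaklySingular T f) (hg : WeaklySingular T g)
    (hx : x ∈ Ioc 0 T) : IntegrableOn (fun s => f (x - s) * g s) (Ioo 0 x) := by
  rw [← intervalIntegrable_iff_integrableOn_Ioo_of_le hx.1.le]
  exact (intervalIntegrable_conv_left hf.continuousOn hg.integrableOn hx).trans
    (intervalIntegrable_conv_right hf hg hx)

lemma intervalIntegrable_conv {a b : ℝ} (hf : WeaklySingular T f) (hg : WeaklySingular T g)
    (hx : x ∈ Ioc 0 T) (ha : 0 ≤ a) (hab : a ≤ b) (hbx : b ≤ x) :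
    IntervalIntegrable (fun s => f (x - s) * g s) volume a b :=
  (intervalIntegrable_iff_integrableOn_Ioo_of_le hab).2
    ((hf.integrableOn_conv hg hx).mono_set (Ioo_subset_Ioo ha hbx))

lemma intervalIntegrable_comp_sub {a : ℝ} (hf : WeaklySingular T f) (hx : x ∈ Ioc 0 T)
    (ha : 0 ≤ a) (hax : a ≤ x) : IntervalIntegrable (fun s => f (x - s)) volume a x := by
  simpa using hf.intervalIntegrable_conv (of_continuousOn (continuousOn_const (c := (1 : ℝ)))) hx ha
    hax le_rfl

lemma halfLineConv_eq_add (hf : WeaklySingular T f) (hg : WeaklySingular T g)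
    (hx : x ∈ Ioc 0 T) : (f ∗₊ g) x =
      (∫ s in 0..x / 2, f (x - s) * g s) + ∫ s in 0..x / 2, g (x - s) * f s := by
  have hswap := intervalIntegral.integral_comp_sub_left
    (fun s => f (x - s) * g s) x (a := 0) (b := x / 2)
  simp only [sub_sub_cancel, sub_zero, sub_half] at hswap
  rw [halfLineConv, ← intervalIntegral_eq_setIntegral_Ioo hx.1.le,
    ← intervalIntegral.integral_add_adjacent_intervals
      (intervalIntegrable_conv_left hf.continuousOn hg.integrableOn hx)
      (intervalIntegrable_conv_right hf hg hx), ← hswap]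
  simp only [mul_comm]

lemma continuousWithinAt_indicator_conv_left {s t : ℝ} (hf : ContinuousOn f (Ioc 0 T))
    (ht : t ∈ Ioc 0 T) (hs : 0 < s) (hst : s ≠ t / 2) :
    ContinuousWithinAt (fun x => (Ioc 0 (x / 2)).indicator (fun s => f (x - s) * g s) s)
      (Ioc 0 T) t := by
  rcases lt_or_gt_of_ne hst with hlt | hgt
  · have hft : ContinuousAt f (t - s) :=
      hf.continuousAt (Ioc_mem_nhds (by linarith [ht.1]) (by linarith [ht.2]))
    have hsub : ContinuousAt (fun x => x - s) t := by fun_prop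
    have hcont := (ContinuousAt.comp (f := fun x => x - s) hft hsub).mul_const (g s)
    refine hcont.continuousWithinAt.congr_of_eventuallyEq ?_
      (indicator_of_mem (mem_Ioc.2 ⟨hs, hlt.le⟩) _)
    filter_upwards [mem_nhdsWithin_of_mem_nhds (lt_mem_nhds (show 2 * s < t by linarith))]
      with x hx
    exact indicator_of_mem (mem_Ioc.2 ⟨hs, by linarith⟩) _
  · refine (continuousWithinAt_const (b := (0 : ℝ))).congr_of_eventuallyEq ?_
      (indicator_of_notMem (fun h => by linarith [h.2]) _)
    filter_upwards [mem_nhdsWithin_of_mem_nhds (gt_mem_nhds (show t < 2 * s by linarith))]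
      with x hx
    exact indicator_of_notMem (fun h => by linarith [h.2]) _

lemma continuousOn_conv_left (hf : ContinuousOn f (Ioc 0 T)) (hg : IntegrableOn g (Ioc 0 T)) :
    ContinuousOn (fun x => ∫ s in 0..x / 2, f (x - s) * g s) (Ioc 0 T) := by
  intro t ht
  set F : ℝ → ℝ → ℝ := fun x => (Ioc 0 (x / 2)).indicator fun s => f (x - s) * g s
  have hF : ∀ x ∈ Ioc 0 T, ∫ s in 0..x / 2, f (x - s) * g s = ∫ s in Ioc 0 T, F x s := by
    intro x hx
    rw [intervalIntegral.integral_of_le (by linarith [hx.1]), setIntegral_indicator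
      measurableSet_Ioc, inter_eq_right.2 (Ioc_subset_Ioc_right (by linarith [hx.1, hx.2]))]
  refine ContinuousWithinAt.congr ?_ hF (hF t ht)
  obtain ⟨C, hC⟩ := isCompact_Icc.exists_bound_of_continuousOn
    (hf.mono fun y (hy : y ∈ Icc (t / 4) T) => ⟨by linarith [hy.1, ht.1], hy.2⟩)
  have hnear : ∀ᶠ x in 𝓝[Ioc 0 T] t, t / 2 < x ∧ x ∈ Ioc 0 T :=
    ((lt_mem_nhds (half_lt_self ht.1)).filter_mono nhdsWithin_le_nhds).and self_mem_nhdsWithin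
  refine continuousWithinAt_of_dominated (bound := fun s => C * |g s|) ?_ ?_
    (hg.abs.const_mul C) ?_
  · filter_upwards [hnear] with x hx
    exact ((integrable_indicator_iff measurableSet_Ioc).2
      (integrableOn_conv_left hf hg hx.2)).aestronglyMeasurable.restrict
  · filter_upwards [hnear] with x hx
    filter_upwards with s
    by_cases hs : s ∈ Ioc 0 (x / 2)
    · rw [show F x s = _ from indicator_of_mem hs _, norm_mul, Real.norm_eq_abs (g s)]
      exact mul_le_mul_of_nonneg_right
        (hC _ ⟨by linarith [hs.2, hx.1], by linarith [hs.1, hx.2.2]⟩) (abs_nonneg _)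
    · rw [show F x s = _ from indicator_of_notMem hs _, norm_zero]
      exact mul_nonneg ((norm_nonneg _).trans (hC t ⟨by linarith [ht.1], ht.2⟩)) (abs_nonneg _)
  · filter_upwards [ae_restrict_of_ae (Measure.ae_ne volume (t / 2)),
      ae_restrict_mem measurableSet_Ioc] with s hst hs
    exact continuousWithinAt_indicator_conv_left hf ht hs.1 hst

lemma integrable_indicator (hf : WeaklySingular T f) : Integrable ((Ioc 0 T).indicator f) :=
  (integrable_indicator_iff measurableSet_Ioc).2 hf.integrableOn

protected lemma halfLineConv (hf : WeaklySingular T f) (hg : WeaklySingular T g) :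
    WeaklySingular T (f ∗₊ g) where
  continuousOn := ((continuousOn_conv_left hf.continuousOn hg.integrableOn).add
    (continuousOn_conv_left hg.continuousOn hf.integrableOn)).congr
      fun _ hx => halfLineConv_eq_add hf hg hx
  integrableOn := by
    refine (hf.integrable_indicator.integrable_convolution (ContinuousLinearMap.mul ℝ ℝ)
      hg.integrable_indicator).integrableOn.congr_fun (fun x hx => ?_) measurableSet_Ioc
    rw [← halfLineConv_eq_convolution (indicator_Ioc_of_nonpos f T) (indicator_Ioc_of_nonpos g T),
      halfLineConv_indicator hx.2]

lemma conv_add (hf : WeaklySingular T f) (hg : WeaklySingular T g) (hh : WeaklySingular T h)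
    (hx : x ∈ Ioc 0 T) : (f ∗₊ (g + h)) x = (f ∗₊ g) x + (f ∗₊ h) x := by
  simp only [halfLineConv, Pi.add_apply, mul_add]
  exact integral_add (hf.integrableOn_conv hg hx) (hf.integrableOn_conv hh hx)

lemma conv_sub (hf : WeaklySingular T f) (hg : WeaklySingular T g) (hh : WeaklySingular T h)
    (hx : x ∈ Ioc 0 T) : (f ∗₊ (g - h)) x = (f ∗₊ g) x - (f ∗₊ h) x := by
  simp only [halfLineConv, Pi.sub_apply, mul_sub]
  exact integral_sub (hf.integrableOn_conv hg hx) (hf.integrableOn_conv hh hx)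

end WeaklySingular

lemma halfLineConv_smul (c : ℝ) (f g : ℝ → ℝ) : f ∗₊ (c • g) = c • (f ∗₊ g) := by
  ext x
  simp only [halfLineConv, Pi.smul_apply, smul_eq_mul, mul_left_comm _ c, integral_const_mul]

lemma convolutionExistsAt_of_integrableOn (hf : ∀ t ≤ 0, f t = 0) (hg : ∀ t ≤ 0, g t = 0)
    (h : IntegrableOn (fun s => g (x - s) * f s) (Ioo 0 x)) :
    ConvolutionExistsAt f g x (ContinuousLinearMap.mul ℝ ℝ) := by
  rw [← integrable_indicator_iff measurableSet_Ioo,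
    ← halfLineConv_integrand_eq_indicator hg hf] at h
  simpa only [ConvolutionExistsAt, ContinuousLinearMap.mul_apply', mul_comm] using h

lemma WeaklySingular.conv_assoc (hf : WeaklySingular T f) (hg : WeaklySingular T g)
    (hh : WeaklySingular T h) (hx : x ∈ Ioc 0 T) : (f ∗₊ g ∗₊ h) x = (f ∗₊ (g ∗₊ h)) x := by
  set F := (Ioc 0 T).indicator f
  set G := (Ioc 0 T).indicator g
  set H := (Ioc 0 T).indicator h
  have hF := indicator_Ioc_of_nonpos f T
  have hG := indicator_Ioc_of_nonpos g T
  have hH := indicator_Ioc_of_nonpos h T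
  have hconv {u v : ℝ → ℝ} : ∀ t ≤ 0, (u ∗₊ v) t = 0 := fun _ => halfLineConv_of_nonpos
  have hmem {t : ℝ} (ht : t ∈ Ioo 0 x) : t ≤ T := ht.2.le.trans hx.2
  have hnorm {u : ℝ → ℝ} (hu : ∀ t ≤ 0, u t = 0) : ∀ t ≤ 0, ‖u t‖ = 0 :=
    fun t ht => by rw [hu t ht, norm_zero]
  have hl : (f ∗₊ g ∗₊ h) x = (F ∗₊ G ∗₊ H) x := halfLineConv_congr
    (fun t ht => (halfLineConv_indicator (hmem ht)).symm) (eqOn_indicator_Ioc h hx.2)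
  have hr : (f ∗₊ (g ∗₊ h)) x = (F ∗₊ (G ∗₊ H)) x := halfLineConv_congr
    (eqOn_indicator_Ioc f hx.2) fun t ht => (halfLineConv_indicator (hmem ht)).symm
  rw [hl, hr, halfLineConv_eq_convolution hconv hH, halfLineConv_eq_convolution hF hconv,
    halfLineConv_eq_convolution hF hG, halfLineConv_eq_convolution hG hH]
  refine convolution_assoc _ _ _ _ (fun a b c => mul_assoc a b c)
    hf.integrable_indicator.aestronglyMeasurable hg.integrable_indicator.aestronglyMeasurable
    hh.integrable_indicator.aestronglyMeasurable
    (hf.integrable_indicator.ae_convolution_exists _ hg.integrable_indicator)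
    (hg.integrable_indicator.norm.ae_convolution_exists _ hh.integrable_indicator.norm) ?_
  rw [← halfLineConv_eq_convolution (hnorm hG) (hnorm hH)]
  refine convolutionExistsAt_of_integrableOn (hnorm hF) hconv
    (((hg.abs.halfLineConv hh.abs).integrableOn_conv hf.abs hx).congr_fun (fun t ht => ?_)
      measurableSet_Ioo)
  have habs {u : ℝ → ℝ} {y : ℝ} (hy : y ≤ T) :
      EqOn |u| (fun t => ‖(Ioc 0 T).indicator u t‖) (Ioo 0 y) := fun t ht =>
    congrArg norm (eqOn_indicator_Ioc u hy ht)
  have hxt : x - t ≤ T := by linarith [ht.1, hx.2]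
  exact congrArg₂ _ (halfLineConv_congr (habs hxt) (habs hxt)) (habs hx.2 ht)

end halfLineConv

/-- The Riemann–Liouville kernel `t^(b-1) / Γ(b)` of fractional integration of order `b`. Since
`Real.Gamma` vanishes at `0, -1, -2, …`, so does the kernel of these orders, in agreement with the
meromorphic continuation of `1 / Γ`. -/
noncomputable def rlKernel (b t : ℝ) : ℝ := t ^ (b - 1) / Gamma b

section rlKernel

variable {a b s t T : ℝ}

lemma rlKernel_pos (hb : 0 < b) (ht : 0 < t) : 0 < rlKernel b t :=
  div_pos (rpow_pos_of_pos ht _) (Gamma_pos_of_pos hb)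

lemma rlKernel_one : rlKernel 1 = 1 := by
  ext t
  simp [rlKernel]

lemma hasDerivAt_rlKernel (b : ℝ) (ht : 0 < t) :
    HasDerivAt (rlKernel (b + 1)) (rlKernel b t) t := by
  have hpow := (hasDerivAt_rpow_const (p := b) (Or.inl ht.ne')).div_const (Gamma (b + 1))
  have hval : b * t ^ (b - 1) / Gamma (b + 1) = rlKernel b t := by
    rcases eq_or_ne b 0 with rfl | hb
    · simp [rlKernel]
    · rw [Gamma_add_one hb, mul_div_mul_left _ _ hb, rlKernel]
  rw [hval] at hpow
  exact hpow.congr_of_eventuallyEq (Eventually.of_forall fun y => by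
    rw [rlKernel, add_sub_cancel_right])

lemma mul_rlKernel (b : ℝ) (ht : 0 < t) : t * rlKernel b t = b * rlKernel (b + 1) t := by
  rcases eq_or_ne b 0 with rfl | hb
  · simp [rlKernel]
  rw [rlKernel, rlKernel, Gamma_add_one hb, add_sub_cancel_right, rpow_sub_one ht.ne']
  field_simp

lemma continuousOn_rlKernel (b : ℝ) : ContinuousOn (rlKernel b) (Ioi 0) := fun _ ht =>
  ((continuousAt_rpow_const _ (b - 1) (Or.inl (ne_of_gt ht))).div_const _).continuousWithinAt

lemma tendsto_rlKernel_zero (hb : 1 < b) : Tendsto (rlKernel b) (𝓝 0) (𝓝 0) := by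
  have hcont := (continuousAt_rpow_const 0 (b - 1) (Or.inr (by linarith))).div_const (Gamma b)
  rwa [ContinuousAt, zero_rpow (by linarith), zero_div] at hcont

lemma weaklySingular_rlKernel (hb : 0 < b) (T : ℝ) : WeaklySingular T (rlKernel b) where
  continuousOn := (continuousOn_rlKernel b).mono fun _ ht => ht.1
  integrableOn :=
    ((intervalIntegral.intervalIntegrable_rpow' (r := b - 1) (by linarith)).div_const _).1

lemma integral_rpow_mul_rpow (ha : 0 < a) (hb : 0 < b) (ht : 0 < t) :
    ∫ s in Ioo 0 t, s ^ (a - 1) * (t - s) ^ (b - 1) =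
      t ^ (a + b - 1) * (Gamma a * Gamma b / Gamma (a + b)) := by
  have hbeta := Complex.betaIntegral_scaled (a : ℂ) (b : ℂ) ht
  rw [Complex.betaIntegral_eq_Gamma_mul_div (a : ℂ) (b : ℂ) (by simpa) (by simpa),
    intervalIntegral.integral_of_le ht.le, integral_Ioc_eq_integral_Ioo] at hbeta
  have hint : ∫ s in Ioo 0 t, (s : ℂ) ^ ((a : ℂ) - 1) * ((t : ℂ) - s) ^ ((b : ℂ) - 1) =
      ((∫ s in Ioo 0 t, s ^ (a - 1) * (t - s) ^ (b - 1) : ℝ) : ℂ) := by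
    rw [← integral_complex_ofReal]
    refine setIntegral_congr_fun measurableSet_Ioo fun s hs => ?_
    push_cast [Complex.ofReal_cpow hs.1.le, Complex.ofReal_cpow (sub_nonneg.2 hs.2.le)]
    rfl
  have hpow : (t : ℂ) ^ ((a : ℂ) + b - 1) = ((t ^ (a + b - 1) : ℝ) : ℂ) := by
    push_cast [Complex.ofReal_cpow ht.le]
    rfl
  rw [hint, hpow, ← Complex.ofReal_add] at hbeta
  simp only [Complex.Gamma_ofReal] at hbeta
  exact_mod_cast hbeta

lemma rlKernel_conv_rlKernel (ha : 0 < a) (hb : 0 < b) (ht : 0 < t) :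
    (rlKernel a ∗₊ rlKernel b) t = rlKernel (a + b) t := by
  have hscale (s : ℝ) : rlKernel b (t - s) * rlKernel a s =
      (Gamma a * Gamma b)⁻¹ * (s ^ (a - 1) * (t - s) ^ (b - 1)) := by
    simp only [rlKernel]
    field_simp
  have hGa := (Gamma_pos_of_pos ha).ne'
  have hGb := (Gamma_pos_of_pos hb).ne'
  rw [halfLineConv_comm, halfLineConv]
  simp_rw [hscale]
  rw [integral_const_mul, integral_rpow_mul_rpow ha hb ht, rlKernel]
  field_simp

lemma abs_rlKernel_sub_le (hb : b ≤ 1) (hs : 0 < s) (hst : s ≤ t) :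
    |rlKernel (b + 1) t - rlKernel (b + 1) s| ≤ |rlKernel b s| * (t - s) := by
  have hmono : ∀ y ∈ Icc s t, ‖rlKernel b y‖ ≤ |rlKernel b s| := fun y hy => by
    have hpow : y ^ (b - 1) ≤ s ^ (b - 1) := rpow_le_rpow_of_nonpos hs hy.1 (by linarith)
    rw [Real.norm_eq_abs, rlKernel, rlKernel, abs_div, abs_div,
      abs_of_pos (rpow_pos_of_pos (hs.trans_le hy.1) _), abs_of_pos (rpow_pos_of_pos hs _)]
    gcongr
  have h := (convex_Icc s t).norm_image_sub_le_of_norm_hasDerivWithin_le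
    (fun y hy => (hasDerivAt_rlKernel b (hs.trans_le hy.1)).hasDerivWithinAt) hmono
    (left_mem_Icc.2 hst) (right_mem_Icc.2 hst)
  rwa [Real.norm_eq_abs, Real.norm_eq_abs, abs_of_nonneg (sub_nonneg.2 hst)] at h

lemma rlKernel_mul_rlKernel_le {t₀ : ℝ} (hb : b ≤ 1) (hs : 0 < s) (hst : s < t) (ht₀ : t < t₀) :
    rlKernel b (t₀ - s) * rlKernel b t ≤ rlKernel b t₀ * rlKernel b (t - s) := by
  have hpow : (t₀ - s) ^ (b - 1) * t ^ (b - 1) ≤ t₀ ^ (b - 1) * (t - s) ^ (b - 1) := by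
    rw [← mul_rpow (by linarith) (by linarith), ← mul_rpow (by linarith) (by linarith)]
    exact rpow_le_rpow_of_nonpos (by nlinarith) (by nlinarith) (by linarith)
  simp only [rlKernel, div_mul_div_comm]
  gcongr
  exact mul_self_nonneg _

end rlKernel

/-- The kernel `t^(b-1) E_{α,b}(c t^α)`. For `b = α` it is the resolvent kernel of `D^α - c`: its
convolution with `r` solves `D^α u - c u = r`. -/
noncomputable def mittagLefflerKernel (α c b t : ℝ) : ℝ :=
  t ^ (b - 1) * mittagLeffler α b (c * t ^ α)

section mittagLeffler

variable {α a b t : ℝ}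

lemma rpow_mul_exp_neg_le_Gamma {A x : ℝ} (hA : 0 < A) (hx : 1 ≤ x) :
    A ^ (x - 1) * exp (-A) ≤ Gamma x := by
  have hint := GammaIntegral_convergent (zero_lt_one.trans_le hx)
  have hsub := Ioi_subset_Ioi hA.le
  calc A ^ (x - 1) * exp (-A) = ∫ t in Ioi A, A ^ (x - 1) * exp (-t) := by
        rw [integral_const_mul, integral_exp_neg_Ioi]
    _ ≤ ∫ t in Ioi A, exp (-t) * t ^ (x - 1) := by
        refine setIntegral_mono_on ((integrableOn_exp_neg_Ioi A).const_mul _)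
          (hint.mono_set hsub) measurableSet_Ioi fun t (ht : A < t) => ?_
        rw [mul_comm]
        gcongr
    _ ≤ ∫ t in Ioi 0, exp (-t) * t ^ (x - 1) :=
        setIntegral_mono_set hint (ae_restrict_of_forall_mem measurableSet_Ioi
          fun t (ht : 0 < t) => by positivity) hsub.eventuallyLE
    _ = Gamma x := (Gamma_eq_integral (zero_lt_one.trans_le hx)).symm

lemma Gamma_natCast_mul_add_pos (hα : 0 < α) (hb : 0 < b) (n : ℕ) : 0 < Gamma (α * n + b) :=
  Gamma_pos_of_pos (by positivity)

lemma summable_pow_div_Gamma (hα : 0 < α) (hb : 0 < b) (z : ℝ) :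
    Summable fun n : ℕ => z ^ n / Gamma (α * n + b) := by
  -- With `A ^ α = 2 (|z| + 1)`, the lower bound for `Γ` makes the tail geometric of ratio `1 / 2`.
  set w := |z| + 1
  have hw : 0 < w := by positivity
  set A := (2 * w) ^ α⁻¹
  have hA : 0 < A := by positivity
  have hApow (n : ℕ) : A ^ (α * n + b - 1) = (2 * w) ^ n * A ^ (b - 1) := by
    rw [add_sub_assoc, rpow_add hA, rpow_mul hA.le, rpow_natCast, rpow_inv_rpow (by positivity)
      hα.ne']
  refine (summable_geometric_of_lt_one (r := 1 / 2) (by norm_num) (by norm_num)).mul_left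
    (exp A / A ^ (b - 1)) |>.of_norm_bounded_eventually_nat ?_
  filter_upwards [eventually_ge_atTop ⌈1 / α⌉₊] with n hn
  have hone : 1 ≤ α * n + b := by
    have : 1 ≤ α * n := by rw [← div_le_iff₀' hα]; exact Nat.ceil_le.1 hn
    linarith
  have hGamma := rpow_mul_exp_neg_le_Gamma hA hone
  rw [hApow] at hGamma
  calc ‖z ^ n / Gamma (α * n + b)‖ = |z| ^ n / Gamma (α * n + b) := by
        rw [norm_div, norm_pow, norm_eq_abs, norm_of_nonneg (Gamma_natCast_mul_add_pos hα hb n).le]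
    _ ≤ w ^ n / ((2 * w) ^ n * A ^ (b - 1) * exp (-A)) := by
        gcongr
        exact le_add_of_nonneg_right zero_le_one
    _ = exp A / A ^ (b - 1) * (1 / 2) ^ n := by
        rw [exp_neg, mul_pow, one_div_pow]
        field_simp

lemma continuous_mittagLeffler (hα : 0 < α) (hb : 0 < b) : Continuous (mittagLeffler α b) := by
  refine continuous_iff_continuousAt.2 fun z => ?_
  have hball : ContinuousOn (mittagLeffler α b) (Metric.ball 0 (|z| + 1)) := by
    refine continuousOn_tsum (fun n => by fun_prop)
      (summable_pow_div_Gamma hα hb (|z| + 1)) fun n x hx => ?_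
    have hΓ := Gamma_natCast_mul_add_pos hα hb n
    rw [mem_ball_zero_iff] at hx
    rw [norm_div, norm_pow, norm_of_nonneg hΓ.le]
    gcongr
  exact hball.continuousAt (Metric.isOpen_ball.mem_nhds (by simp))

lemma mittagLeffler_zero (α b : ℝ) : mittagLeffler α b 0 = 1 / Gamma b := by
  rw [mittagLeffler, tsum_eq_single 0 fun n hn => by simp [hn]]
  simp

variable (c : ℝ)

lemma hasSum_mittagLefflerKernel (hα : 0 < α) (hb : 0 < b) (ht : 0 < t) :
    HasSum (fun n : ℕ => c ^ n * rlKernel (α * n + b) t) (mittagLefflerKernel α c b t) := by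
  refine ((summable_pow_div_Gamma hα hb (c * t ^ α)).hasSum.mul_left (t ^ (b - 1))).congr_fun
    fun n => ?_
  rw [rlKernel, mul_pow, ← rpow_mul_natCast ht.le, add_sub_assoc, rpow_add ht]
  ring

lemma mittagLefflerKernel_eq_add (hα : 0 < α) (hb : 0 < b) (ht : 0 < t) :
    mittagLefflerKernel α c b t = rlKernel b t + c * mittagLefflerKernel α c (b + α) t := by
  have hshift := (hasSum_mittagLefflerKernel c hα (add_pos hb hα) ht).mul_left c
  refine (hasSum_mittagLefflerKernel c hα hb ht).unique ?_
  rw [← hasSum_nat_add_iff' 1]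
  simp only [Finset.sum_range_one, pow_zero, Nat.cast_zero, mul_zero, zero_add, one_mul,
    add_sub_cancel_left]
  refine hshift.congr_fun fun n => ?_
  rw [pow_succ, Nat.cast_succ, mul_add_one, add_assoc, add_comm α b]
  ring

lemma weaklySingular_mittagLefflerKernel (hα : 0 < α) (hb : 0 < b) (T : ℝ) :
    WeaklySingular T (mittagLefflerKernel α c b) := by
  have hcont : Continuous fun t : ℝ => Gamma b * mittagLeffler α b (c * t ^ α) :=
    continuous_const.mul ((continuous_mittagLeffler hα hb).comp
      (continuous_const.mul (continuous_rpow_const hα.le)))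
  have hrl := weaklySingular_rlKernel hb T
  have hΓ := (Gamma_pos_of_pos hb).ne'
  have heq : mittagLefflerKernel α c b =
      fun t => rlKernel b t * (Gamma b * mittagLeffler α b (c * t ^ α)) := by
    ext t
    rw [mittagLefflerKernel, rlKernel]
    field_simp
  rw [heq]
  refine ⟨hrl.continuousOn.mul hcont.continuousOn, ?_⟩
  have hint := hrl.integrableOn
  rw [← integrableOn_Icc_iff_integrableOn_Ioc] at hint ⊢
  exact hint.mul_continuousOn hcont.continuousOn isCompact_Icc

lemma rlKernel_conv_mittagLefflerKernel (hα : 0 < α) (ha : 0 < a) (hb : 0 < b) (ht : 0 < t) :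
    (rlKernel a ∗₊ mittagLefflerKernel α c b) t = mittagLefflerKernel α c (a + b) t := by
  have hexp (n : ℕ) : 0 < α * n + b := by positivity
  have hconv (n : ℕ) : (rlKernel a ∗₊ rlKernel (α * n + b)) t = rlKernel (α * n + (a + b)) t := by
    rw [rlKernel_conv_rlKernel ha (hexp n) ht, add_left_comm]
  have hint (n : ℕ) : IntegrableOn
      (fun s => rlKernel a (t - s) * (c ^ n * rlKernel (α * n + b) s)) (Ioo 0 t) :=
    (weaklySingular_rlKernel ha t).integrableOn_conv
      ((weaklySingular_rlKernel (hexp n) t).smul (c ^ n)) (right_mem_Ioc.2 ht)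
  have hsmul (d : ℝ) (n : ℕ) :
      ∫ s in Ioo 0 t, rlKernel a (t - s) * (d * rlKernel (α * n + b) s) =
        d * rlKernel (α * n + (a + b)) t := by
    rw [← hconv]
    exact congrFun (halfLineConv_smul d (rlKernel a) (rlKernel (α * n + b))) t
  have hnorm (n : ℕ) :
      ∫ s in Ioo 0 t, ‖rlKernel a (t - s) * (c ^ n * rlKernel (α * n + b) s)‖ =
        |c| ^ n * rlKernel (α * n + (a + b)) t := by
    rw [← hsmul]
    refine setIntegral_congr_fun measurableSet_Ioo fun s hs => ?_
    rw [norm_mul, norm_mul, norm_pow, norm_eq_abs c,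
      norm_of_nonneg (rlKernel_pos ha (sub_pos.2 hs.2)).le,
      norm_of_nonneg (rlKernel_pos (hexp n) hs.1).le]
  have hsum := hasSum_integral_of_summable_integral_norm hint (by
    simp only [hnorm]
    exact (hasSum_mittagLefflerKernel |c| hα (add_pos ha hb) ht).summable)
  simp only [hsmul] at hsum
  rw [(hasSum_mittagLefflerKernel c hα (add_pos ha hb) ht).unique hsum, halfLineConv]
  exact setIntegral_congr_fun measurableSet_Ioo fun s hs =>
    ((hasSum_mittagLefflerKernel c hα hb hs.1).mul_left _).tsum_eq.symm

variable {c}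

lemma mittagLefflerKernel_pos_of_nonneg (hα : 0 < α) (hb : 0 < b) (hc : 0 ≤ c) (ht : 0 < t) :
    0 < mittagLefflerKernel α c b t := by
  have hsum := hasSum_mittagLefflerKernel c hα hb ht
  have hpos (n : ℕ) : 0 < rlKernel (α * n + b) t := rlKernel_pos (by positivity) ht
  rw [← hsum.tsum_eq]
  refine hsum.summable.tsum_pos (fun n => mul_nonneg (pow_nonneg hc n) (hpos n).le) 0 ?_
  simpa only [pow_zero, one_mul] using hpos 0

lemma eventually_mittagLefflerKernel_pos (hα : 0 < α) (hb : 0 < b) :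
    ∀ᶠ t in 𝓝[>] 0, 0 < mittagLefflerKernel α c b t := by
  have hcont : Continuous fun t : ℝ => mittagLeffler α b (c * t ^ α) :=
    (continuous_mittagLeffler hα hb).comp (continuous_const.mul (continuous_rpow_const hα.le))
  have hzero : 0 < mittagLeffler α b (c * 0 ^ α) := by
    rw [zero_rpow hα.ne', mul_zero, mittagLeffler_zero]
    exact one_div_pos.2 (Gamma_pos_of_pos hb)
  filter_upwards [nhdsWithin_le_nhds (hcont.continuousAt.eventually (lt_mem_nhds hzero)),
    self_mem_nhdsWithin] with t hpos ht
  exact mul_pos (rpow_pos_of_pos ht _) hpos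

end mittagLeffler

section ResolventPositivity

variable {k u : ℝ → ℝ} {lam t t₀ : ℝ}

lemma exists_first_nonpos (hu : ContinuousOn u (Ioi 0)) (hnear : ∀ᶠ s in 𝓝[>] 0, 0 < u s)
    (ht : 0 < t) (hut : u t ≤ 0) : ∃ t₀ > 0, u t₀ ≤ 0 ∧ ∀ s ∈ Ioo 0 t₀, 0 < u s := by
  obtain ⟨δ, hδ, hpos⟩ := mem_nhdsGT_iff_exists_Ioo_subset.1 hnear
  set S := Icc δ t ∩ u ⁻¹' Iic 0
  have hclosed : IsClosed S := (hu.mono fun s hs => hδ.trans_le hs.1).preimage_isClosed_of_isClosed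
    isClosed_Icc isClosed_Iic
  have hbdd : BddBelow S := bddBelow_Icc.mono inter_subset_left
  have hδt : δ ≤ t := le_of_not_gt fun h => (hpos ⟨ht, h⟩ : 0 < u t).not_ge hut
  have hmem : sInf S ∈ S := hclosed.csInf_mem ⟨t, ⟨hδt, le_rfl⟩, hut⟩ hbdd
  refine ⟨sInf S, hδ.trans_le hmem.1.1, hmem.2, fun s hs => ?_⟩
  by_contra! hus
  rcases lt_or_ge s δ with hsδ | hsδ
  · exact (hpos ⟨hs.1, hsδ⟩ : 0 < u s).not_ge hus
  · exact (csInf_le hbdd ⟨⟨hsδ, hs.2.le.trans hmem.1.2⟩, hus⟩).not_gt hs.2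

lemma resolvent_mul_le (hk : WeaklySingular t₀ k) (hu : WeaklySingular t₀ u)
    (hlog : ∀ s ∈ Ioo 0 t, k (t₀ - s) * k t ≤ k t₀ * k (t - s)) (hlam : 0 ≤ lam)
    (heq : ∀ s ∈ Ioc 0 t₀, u s = k s - lam * (k ∗₊ u) s) (hu_pos : ∀ s ∈ Ioo 0 t₀, 0 < u s)
    (ht : t ∈ Ioo 0 t₀) :
    k t₀ * u t ≤ k t * (u t₀ + lam * ∫ s in t..t₀, k (t₀ - s) * u s) := by
  have hmem : t₀ ∈ Ioc 0 t₀ := right_mem_Ioc.2 (ht.1.trans ht.2)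
  have hint_left := hk.intervalIntegrable_conv hu hmem le_rfl ht.1.le ht.2.le
  have hint_right := hk.intervalIntegrable_conv hu hmem ht.1.le ht.2.le le_rfl
  have hint_t := hk.intervalIntegrable_conv hu ⟨ht.1, ht.2.le⟩ le_rfl ht.1.le le_rfl
  have hcompare : k t * ∫ s in 0..t, k (t₀ - s) * u s ≤ k t₀ * ∫ s in 0..t, k (t - s) * u s := by
    rw [← intervalIntegral.integral_const_mul, ← intervalIntegral.integral_const_mul]
    refine intervalIntegral.integral_mono_on_of_le_Ioo ht.1.le (hint_left.const_mul _)
      (hint_t.const_mul _) fun s hs => ?_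
    have := mul_le_mul_of_nonneg_right (hlog s hs) (hu_pos s ⟨hs.1, hs.2.trans ht.2⟩).le
    linarith
  have heq_t := heq t ⟨ht.1, ht.2.le⟩
  have heq_t₀ := heq t₀ hmem
  rw [halfLineConv, ← intervalIntegral_eq_setIntegral_Ioo ht.1.le] at heq_t
  rw [halfLineConv, ← intervalIntegral_eq_setIntegral_Ioo hmem.1.le,
    ← intervalIntegral.integral_add_adjacent_intervals hint_left hint_right] at heq_t₀
  rw [heq_t, heq_t₀]
  linarith [mul_le_mul_of_nonneg_left hcompare hlam]

lemma tendsto_integral_comp_sub_nhdsLT (hk : IntegrableOn k (Ioc 0 t₀)) (ht₀ : 0 < t₀) :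
    Tendsto (fun t => ∫ s in t..t₀, k (t₀ - s)) (𝓝[<] t₀) (𝓝 0) := by
  have hprim : ContinuousOn (fun x => ∫ s in 0..x, k s) (Icc 0 t₀) :=
    intervalIntegral.continuousOn_primitive_interval'
      ((intervalIntegrable_iff_integrableOn_Ioc_of_le ht₀.le).2 hk) left_mem_uIcc |>.mono
        (by rw [uIcc_of_le ht₀.le])
  have hsub : Tendsto (fun t => t₀ - t) (𝓝[<] t₀) (𝓝[Icc 0 t₀] 0) := by
    refine tendsto_nhdsWithin_iff.2 ⟨?_, ?_⟩
    · exact (Continuous.tendsto' (by fun_prop) _ _ (sub_self t₀)).mono_left nhdsWithin_le_nhds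
    · filter_upwards [Ioo_mem_nhdsLT ht₀] with t ht
      exact ⟨by linarith [ht.2], by linarith [ht.1]⟩
  have hlim := ((hprim 0 (left_mem_Icc.2 ht₀.le)).tendsto).comp hsub
  simpa only [Function.comp_def, intervalIntegral.integral_same,
    intervalIntegral.integral_comp_sub_left k, sub_self] using hlim

lemma resolvent_pos_of_pos_Ioo (hk : WeaklySingular t₀ k) (hu : WeaklySingular t₀ u)
    (hk_pos : ∀ s, 0 < s → 0 < k s)
    (hlog : ∀ t ∈ Ioo 0 t₀, ∀ s ∈ Ioo 0 t, k (t₀ - s) * k t ≤ k t₀ * k (t - s)) (hlam : 0 ≤ lam)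
    (heq : ∀ s ∈ Ioc 0 t₀, u s = k s - lam * (k ∗₊ u) s) (hu_pos : ∀ s ∈ Ioo 0 t₀, 0 < u s)
    (ht₀ : 0 < t₀) : 0 < u t₀ := by
  by_contra! hut₀
  have hmem : t₀ ∈ Ioc 0 t₀ := right_mem_Ioc.2 ht₀
  have hk_left : Tendsto k (𝓝[<] t₀) (𝓝 (k t₀)) :=
    (hk.continuousOn t₀ hmem).mono_left (nhdsWithin_le_of_mem (Ioc_mem_nhdsLT ht₀))
  have hsmall : ∀ᶠ t in 𝓝[<] t₀, k t * (lam * ∫ s in t..t₀, k (t₀ - s)) < k t₀ := by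
    refine (hk_left.mul ((tendsto_integral_comp_sub_nhdsLT hk.integrableOn ht₀).const_mul
      lam)).eventually_lt_const ?_
    simpa only [mul_zero] using hk_pos t₀ ht₀
  obtain ⟨t₁, ht₁, hsmall⟩ := (mem_nhdsLT_iff_exists_mem_Ico_Ioo_subset ht₀).1 hsmall
  -- At a maximum of `u` over `[t₂, t₀]`, the part of the equation beyond it is too small.
  obtain ⟨t₂, ht₂⟩ := exists_between ht₁.2
  have ht₂_pos : 0 < t₂ := ht₁.1.trans_lt ht₂.1
  obtain ⟨t, ht, hmax⟩ := isCompact_Icc.exists_isMaxOn (nonempty_Icc.2 ht₂.2.le)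
    (hu.continuousOn.mono fun s hs => ⟨ht₂_pos.trans_le hs.1, hs.2⟩)
  have hut : 0 < u t := (hu_pos t₂ ⟨ht₂_pos, ht₂.2⟩).trans_le (hmax (left_mem_Icc.2 ht₂.2.le))
  have htt₀ : t ∈ Ioo 0 t₀ := ⟨ht₂_pos.trans_le ht.1, ht.2.lt_of_ne (by rintro rfl; linarith)⟩
  have htail : ∫ s in t..t₀, k (t₀ - s) * u s ≤ (∫ s in t..t₀, k (t₀ - s)) * u t := by
    rw [← intervalIntegral.integral_mul_const]
    refine intervalIntegral.integral_mono_on_of_le_Ioo htt₀.2.le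
      (hk.intervalIntegrable_conv hu hmem htt₀.1.le htt₀.2.le le_rfl)
      ((hk.intervalIntegrable_comp_sub hmem htt₀.1.le htt₀.2.le).mul_const _) fun s hs => ?_
    exact mul_le_mul_of_nonneg_left (hmax ⟨ht.1.trans hs.1.le, hs.2.le⟩)
      (hk_pos _ (sub_pos.2 hs.2)).le
  have hle := resolvent_mul_le hk hu (hlog t htt₀) hlam heq hu_pos htt₀
  have hktail := mul_lt_mul_of_pos_right (hsmall ⟨ht₂.1.trans_le ht.1, htt₀.2⟩) hut
  have hkt := hk_pos t htt₀.1
  have : k t * (u t₀ + lam * ∫ s in t..t₀, k (t₀ - s) * u s) ≤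
      k t * (lam * ((∫ s in t..t₀, k (t₀ - s)) * u t)) := by
    gcongr
    linarith [mul_le_mul_of_nonneg_left htail hlam]
  linarith

lemma resolvent_pos (hk : ∀ T, WeaklySingular T k) (hu : ∀ T, WeaklySingular T u)
    (hk_pos : ∀ s, 0 < s → 0 < k s)
    (hlog : ∀ s t t₀, 0 < s → s < t → t < t₀ → k (t₀ - s) * k t ≤ k t₀ * k (t - s))
    (hlam : 0 ≤ lam) (heq : ∀ s, 0 < s → u s = k s - lam * (k ∗₊ u) s)
    (hnear : ∀ᶠ s in 𝓝[>] 0, 0 < u s) (ht : 0 < t) : 0 < u t := by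
  by_contra! hut
  have hcont : ContinuousOn u (Ioi 0) := fun s (hs : 0 < s) =>
    ((hu (s + 1)).continuousOn.continuousAt (Ioc_mem_nhds hs (lt_add_one s))).continuousWithinAt
  obtain ⟨t₀, ht₀, hut₀, hu_pos⟩ := exists_first_nonpos hcont hnear ht hut
  exact hut₀.not_gt <| resolvent_pos_of_pos_Ioo (hk t₀) (hu t₀) hk_pos
    (fun t ht s hs => hlog s t t₀ hs.1 hs.2 ht.2) hlam (fun s hs => heq s hs.1) hu_pos ht₀

lemma mittagLefflerKernel_pos {α c : ℝ} (hα : α ∈ Ioo 0 1) (ht : 0 < t) :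
    0 < mittagLefflerKernel α c α t := by
  rcases le_or_gt 0 c with hc | hc
  · exact mittagLefflerKernel_pos_of_nonneg hα.1 hα.1 hc ht
  · refine resolvent_pos (lam := -c) (weaklySingular_rlKernel hα.1)
      (weaklySingular_mittagLefflerKernel c hα.1 hα.1) (fun s => rlKernel_pos hα.1)
      (fun s t t₀ => rlKernel_mul_rlKernel_le hα.2.le) (neg_nonneg.2 hc.le) (fun s hs => ?_)
      (eventually_mittagLefflerKernel_pos hα.1 hα.1) ht
    rw [rlKernel_conv_mittagLefflerKernel c hα.1 hα.1 hα.1 hs,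
      mittagLefflerKernel_eq_add c hα.1 hα.1 hs]
    ring

end ResolventPositivity

section RightDerivative

variable {b C T s t : ℝ} {g : ℝ → ℝ}

lemma abs_slope_rlKernel_mul_le {u : ℝ} (hb : b ∈ Ioc (-1) 1) (hs : 0 < s) (hst : s < t)
    (hu : |u| ≤ C * s) : |slope (rlKernel (b + 1)) s t * u| ≤ C * |b| * rlKernel (b + 1) s := by
  have hkernel := abs_rlKernel_sub_le hb.2 hs hst.le
  rw [slope_def_field, abs_mul, abs_div, abs_of_pos (sub_pos.2 hst)]
  calc _ ≤ |rlKernel b s| * (C * s) :=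
        mul_le_mul ((div_le_iff₀ (sub_pos.2 hst)).2 hkernel) hu (abs_nonneg _) (abs_nonneg _)
    _ = C * |s * rlKernel b s| := by rw [abs_mul, abs_of_pos hs]; ring
    _ = C * |b| * rlKernel (b + 1) s := by
        rw [mul_rlKernel b hs, abs_mul, abs_of_pos (rlKernel_pos (by linarith [hb.1]) hs),
          mul_assoc]

lemma hasDerivWithinAt_integral_rlKernel_near (hb : b ∈ Ioc (-1) 1) (hg : WeaklySingular T g)
    (hC : ∀ s ∈ Ioc 0 T, |g s| ≤ C * |t - s|) (ht : t ∈ Ioo 0 T) :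
    HasDerivWithinAt (fun x => ∫ s in 0..t, rlKernel (b + 1) (x - s) * g s)
      (∫ s in 0..t, rlKernel b (t - s) * g s) (Ioi t) t := by
  have hb1 : 0 < b + 1 := by linarith [hb.1]
  have hint {x : ℝ} (hx : x ∈ Ico t T) := (weaklySingular_rlKernel hb1 T).intervalIntegrable_conv
    hg ⟨ht.1.trans_le hx.1, hx.2.le⟩ le_rfl ht.1.le hx.1
  have hright : ∀ᶠ x in 𝓝[>] t, x ∈ Ioo t T := Ioo_mem_nhdsGT ht.2
  rw [hasDerivWithinAt_iff_tendsto_slope' self_notMem_Ioi]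
  have hquot (x s : ℝ) : slope (rlKernel (b + 1)) (t - s) (x - s) * g s =
      (rlKernel (b + 1) (x - s) * g s - rlKernel (b + 1) (t - s) * g s) / (x - t) := by
    rw [slope_def_field, sub_sub_sub_cancel_right]
    ring
  have hslope : ∀ x ∈ Ioo t T, slope (fun x => ∫ s in 0..t, rlKernel (b + 1) (x - s) * g s) t x =
      ∫ s in 0..t, slope (rlKernel (b + 1)) (t - s) (x - s) * g s := by
    intro x hx
    simp only [hquot]
    rw [slope_def_field, intervalIntegral.integral_div,
      intervalIntegral.integral_sub (hint ⟨hx.1.le, hx.2⟩) (hint ⟨le_rfl, ht.2⟩)]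
  refine Tendsto.congr' (hright.mono fun x hx => (hslope x hx).symm) ?_
  refine intervalIntegral.tendsto_integral_filter_of_dominated_convergence
    (fun s => C * |b| * rlKernel (b + 1) (t - s)) ?_ ?_ ?_ ?_
  · filter_upwards [hright] with x hx
    simp only [hquot]
    exact (intervalIntegrable_iff.1 <| ((hint ⟨hx.1.le, hx.2⟩).sub
      (hint ⟨le_rfl, ht.2⟩)).div_const (x - t)).aestronglyMeasurable
  · filter_upwards [hright] with x hx
    filter_upwards [Measure.ae_ne volume t] with s hst hs
    rw [uIoc_of_le ht.1.le] at hs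
    have hts : 0 < t - s := sub_pos.2 (hs.2.lt_of_ne hst)
    have hgs := hC s ⟨hs.1, hs.2.trans ht.2.le⟩
    rw [abs_of_pos hts] at hgs
    exact abs_slope_rlKernel_mul_le hb hts (sub_lt_sub_right hx.1 s) hgs
  · exact ((weaklySingular_rlKernel hb1 T).intervalIntegrable_comp_sub ⟨ht.1, ht.2.le⟩ le_rfl
      ht.1.le).const_mul _
  · filter_upwards [Measure.ae_ne volume t] with s hst hs
    rw [uIoc_of_le ht.1.le] at hs
    have hts : 0 < t - s := sub_pos.2 (hs.2.lt_of_ne hst)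
    have hderiv := ((hasDerivAt_rlKernel b hts).comp_sub_const t s).hasDerivWithinAt (s := Ioi t)
    rw [hasDerivWithinAt_iff_tendsto_slope' self_notMem_Ioi] at hderiv
    simpa only [slope_def_field, sub_sub_sub_cancel_right] using hderiv.mul_const (g s)

lemma integral_rlKernel_comp_sub {a x : ℝ} (ha : 0 < a) (htx : t < x) :
    ∫ s in t..x, rlKernel a (x - s) = rlKernel (a + 1) (x - t) := by
  rw [intervalIntegral.integral_comp_sub_left (rlKernel a), sub_self,
    intervalIntegral_eq_setIntegral_Ioo (sub_pos.2 htx).le,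
    ← rlKernel_conv_rlKernel ha one_pos (sub_pos.2 htx), halfLineConv_comm, halfLineConv,
    rlKernel_one]
  simp only [Pi.one_apply, one_mul]

lemma abs_integral_rlKernel_far_le {x : ℝ} (hb : -1 < b) (hC : ∀ s ∈ Ioc 0 T, |g s| ≤ C * |t - s|)
    (ht : 0 < t) (hx : x ∈ Ioo t T) :
    |∫ s in t..x, rlKernel (b + 1) (x - s) * g s| ≤ C * rlKernel (b + 2) (x - t) * (x - t) := by
  have hb1 : 0 < b + 1 := by linarith
  have hbound : ∀ s ∈ Ioc t x,
      ‖rlKernel (b + 1) (x - s) * g s‖ ≤ C * (x - t) * rlKernel (b + 1) (x - s) := by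
    intro s hs
    have hk : 0 ≤ rlKernel (b + 1) (x - s) :=
      div_nonneg (rpow_nonneg (sub_nonneg.2 hs.2) _) (Gamma_pos_of_pos hb1).le
    have hgs := hC s ⟨ht.trans hs.1, hs.2.trans hx.2.le⟩
    rw [norm_mul, Real.norm_eq_abs, Real.norm_eq_abs, abs_of_nonneg hk, mul_comm]
    refine mul_le_mul_of_nonneg_right (hgs.trans ?_) hk
    have hts := sub_pos.2 hs.1
    rw [abs_sub_comm, abs_of_pos hts] at hgs ⊢
    exact mul_le_mul_of_nonneg_left (sub_le_sub_right hs.2 t)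
      (nonneg_of_mul_nonneg_left ((abs_nonneg _).trans hgs) hts)
  calc |∫ s in t..x, rlKernel (b + 1) (x - s) * g s|
      ≤ ∫ s in t..x, C * (x - t) * rlKernel (b + 1) (x - s) :=
        intervalIntegral.norm_integral_le_of_norm_le hx.1.le (Eventually.of_forall hbound)
          (((weaklySingular_rlKernel hb1 x).intervalIntegrable_comp_sub ⟨ht.trans hx.1, le_rfl⟩
            ht.le hx.1.le).const_mul _)
    _ = C * rlKernel (b + 2) (x - t) * (x - t) := by
        rw [intervalIntegral.integral_const_mul, integral_rlKernel_comp_sub hb1 hx.1]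
        ring_nf

lemma hasDerivWithinAt_integral_rlKernel_far (hb : -1 < b)
    (hC : ∀ s ∈ Ioc 0 T, |g s| ≤ C * |t - s|) (ht : t ∈ Ioo 0 T) :
    HasDerivWithinAt (fun x => ∫ s in t..x, rlKernel (b + 1) (x - s) * g s) 0 (Ioi t) t := by
  rw [hasDerivWithinAt_iff_tendsto_slope' self_notMem_Ioi]
  have hzero : Tendsto (fun x => C * rlKernel (b + 2) (x - t)) (𝓝[>] t) (𝓝 0) := by
    have hsub : Tendsto (fun x => x - t) (𝓝[>] t) (𝓝 0) :=
      tendsto_nhdsWithin_of_tendsto_nhds (by simpa using (continuous_sub_right t).tendsto t)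
    simpa using ((tendsto_rlKernel_zero (by linarith)).comp hsub).const_mul C
  refine squeeze_zero_norm' ?_ hzero
  filter_upwards [Ioo_mem_nhdsGT ht.2] with x hx
  have hxt := sub_pos.2 hx.1
  rw [slope_def_field, intervalIntegral.integral_same, sub_zero, norm_div, Real.norm_eq_abs,
    Real.norm_eq_abs, abs_of_pos hxt, div_le_iff₀ hxt]
  exact abs_integral_rlKernel_far_le hb hC ht.1 hx

lemma hasDerivWithinAt_rlKernel_conv (hb : b ∈ Ioc (-1) 1) (hg : WeaklySingular T g)
    (hC : ∀ s ∈ Ioc 0 T, |g s| ≤ C * |t - s|) (ht : t ∈ Ioo 0 T) :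
    HasDerivWithinAt (rlKernel (b + 1) ∗₊ g) ((rlKernel b ∗₊ g) t) (Ioi t) t := by
  have hb1 : 0 < b + 1 := by linarith [hb.1]
  have hsplit : ∀ x ∈ Ico t T, (rlKernel (b + 1) ∗₊ g) x =
      (∫ s in 0..t, rlKernel (b + 1) (x - s) * g s) +
        ∫ s in t..x, rlKernel (b + 1) (x - s) * g s := by
    intro x hx
    have hint {a c : ℝ} := (weaklySingular_rlKernel hb1 T).intervalIntegrable_conv (a := a)
      (b := c) hg ⟨ht.1.trans_le hx.1, hx.2.le⟩
    rw [intervalIntegral.integral_add_adjacent_intervals (hint le_rfl ht.1.le hx.1)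
      (hint ht.1.le hx.1 le_rfl), intervalIntegral_eq_setIntegral_Ioo (ht.1.le.trans hx.1),
      halfLineConv]
  rw [halfLineConv, ← intervalIntegral_eq_setIntegral_Ioo ht.1.le,
    ← add_zero (intervalIntegral _ _ _ _)]
  refine ((hasDerivWithinAt_integral_rlKernel_near hb hg hC ht).add
    (hasDerivWithinAt_integral_rlKernel_far hb.1 hC ht)).congr_of_eventuallyEq ?_
    (hsplit t ⟨le_rfl, ht.2⟩)
  filter_upwards [Ioo_mem_nhdsGT ht.2] with x hx using hsplit x ⟨hx.1.le, hx.2⟩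

end RightDerivative

/-- The Marchaud form of the Riemann–Liouville derivative of order `α` of `φ` on `(0, ∞)`. It agrees
with the Caputo derivative when `φ 0 = 0`. -/
noncomputable def marchaudDeriv (α : ℝ) (φ : ℝ → ℝ) (t : ℝ) : ℝ :=
  (1 / Gamma (1 - α)) * (t ^ (-α) * φ t + ∫ s in Ioo 0 t, α * (t - s) ^ (-α - 1) * (φ t - φ s))

section Marchaud

variable {α T t : ℝ} {φ : ℝ → ℝ}

lemma marchaudDeriv_eq (hα : α ≠ 0) : marchaudDeriv α φ t =
    φ t * rlKernel (1 - α) t - (rlKernel (-α) ∗₊ fun s => φ t - φ s) t := by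
  have hGamma : Gamma (1 - α) = -α * Gamma (-α) := by
    rw [← Gamma_add_one (neg_ne_zero.2 hα), neg_add_eq_sub]
  have hkernel (y : ℝ) : rlKernel (-α) y = -(1 / Gamma (1 - α)) * (α * y ^ (-α - 1)) := by
    rw [rlKernel, hGamma]
    field_simp
  simp only [marchaudDeriv, halfLineConv, hkernel, mul_assoc, integral_const_mul]
  rw [rlKernel, sub_sub_cancel_left]
  ring

lemma exists_abs_sub_le_mul (hφ : ContinuousOn φ (Icc 0 T))
    (hφt : (fun s => φ s - φ t) =O[𝓝 t] fun s => s - t) (ht : t ∈ Icc 0 T) :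
    ∃ C, ∀ s ∈ Ioc 0 T, |φ t - φ s| ≤ C * |t - s| := by
  obtain ⟨c, hc⟩ := hφt.bound
  obtain ⟨δ, hδ, hball⟩ := Metric.eventually_nhds_iff.1 hc
  obtain ⟨M, hM⟩ := isCompact_Icc.exists_bound_of_continuousOn hφ
  refine ⟨max c ((M + M) / δ), fun s hs => ?_⟩
  rcases lt_or_ge |t - s| δ with hnear | hfar
  · have hst := hball (show dist s t < δ by rwa [dist_comm])
    rw [Real.norm_eq_abs, Real.norm_eq_abs, abs_sub_comm, abs_sub_comm s] at hst
    exact hst.trans (mul_le_mul_of_nonneg_right (le_max_left _ _) (abs_nonneg _))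
  · have hM0 : 0 ≤ M := (norm_nonneg _).trans (hM t ht)
    calc |φ t - φ s| ≤ M + M :=
          (abs_sub _ _).trans (add_le_add (hM t ht) (hM s (Ioc_subset_Icc_self hs)))
      _ = (M + M) / δ * δ := (div_mul_cancel₀ _ hδ.ne').symm
      _ ≤ max c ((M + M) / δ) * |t - s| := by
          gcongr
          exact le_max_right _ _

lemma hasDerivWithinAt_rlKernel_conv_marchaudDeriv (hα : α ∈ Ioo 0 1)
    (hφ : ContinuousOn φ (Icc 0 T)) (hφt : (fun s => φ s - φ t) =O[𝓝 t] fun s => s - t)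
    (ht : t ∈ Ioo 0 T) :
    HasDerivWithinAt (rlKernel (1 - α) ∗₊ φ) (marchaudDeriv α φ t) (Ioi t) t := by
  set g : ℝ → ℝ := fun s => φ t - φ s
  obtain ⟨C, hC⟩ := exists_abs_sub_le_mul hφ hφt (Ioo_subset_Icc_self ht)
  have hk := weaklySingular_rlKernel (sub_pos.2 hα.2) T
  have hone : WeaklySingular T (rlKernel 1) := weaklySingular_rlKernel one_pos T
  have hg : WeaklySingular T g := .of_continuousOn (continuousOn_const.sub hφ)
  have hdecomp : ∀ x ∈ Ioc 0 T, (rlKernel (1 - α) ∗₊ φ) x =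
      φ t * rlKernel (1 - α + 1) x - (rlKernel (1 - α) ∗₊ g) x := by
    intro x hx
    have hφg : φ = φ t • rlKernel 1 - g := by
      ext s
      simp [g, rlKernel_one]
    rw [← rlKernel_conv_rlKernel (sub_pos.2 hα.2) one_pos hx.1, ← smul_eq_mul, ← Pi.smul_apply,
      ← halfLineConv_smul, ← hk.conv_sub (hone.smul _) hg hx, ← hφg]
  have hconst := (hasDerivAt_rlKernel (1 - α) ht.1).hasDerivWithinAt (s := Ioi t)
  have hconv : HasDerivWithinAt (rlKernel (1 - α) ∗₊ g) _ (Ioi t) t := neg_add_eq_sub α 1 ▸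
    hasDerivWithinAt_rlKernel_conv ⟨neg_lt_neg hα.2, by linarith [hα.1]⟩ hg hC ht
  rw [marchaudDeriv_eq hα.1.ne']
  refine ((hconst.const_mul (φ t)).sub hconv).congr_of_eventuallyEq ?_
    (hdecomp t (Ioo_subset_Ioc_self ht))
  filter_upwards [Ioo_mem_nhdsGT ht.2] with x hx using hdecomp x ⟨ht.1.trans hx.1, hx.2.le⟩

end Marchaud

section Comparison

variable {α c lam T x : ℝ} {f g h φ r ρ J J' : ℝ → ℝ}

lemma rlKernel_one_conv (hx : 0 ≤ x) : (rlKernel 1 ∗₊ f) x = ∫ s in 0..x, f s := by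
  simp only [halfLineConv, rlKernel_one, Pi.one_apply, one_mul,
    intervalIntegral_eq_setIntegral_Ioo hx]

namespace WeaklySingular

lemma conv_left_comm (hf : WeaklySingular T f) (hg : WeaklySingular T g) (hh : WeaklySingular T h)
    (hx : x ∈ Ioc 0 T) : (f ∗₊ (g ∗₊ h)) x = (g ∗₊ (f ∗₊ h)) x := by
  rw [← hf.conv_assoc hg hh hx, halfLineConv_comm f g, hg.conv_assoc hf hh hx]

lemma tendsto_conv_zero {M : ℝ} (hT : 0 < T) (hf : WeaklySingular T f)
    (hM : ∀ s ∈ Ioc 0 T, |g s| ≤ M) : Tendsto (f ∗₊ g) (𝓝[>] 0) (𝓝 0) := by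
  have hfint : IntervalIntegrable |f| volume 0 T :=
    (intervalIntegrable_iff_integrableOn_Ioc_of_le hT.le).2 hf.abs.integrableOn
  have hprim : Tendsto (fun x => M * ∫ s in 0..x, |f| s) (𝓝[>] 0) (𝓝 0) := by
    have hcont :=
      intervalIntegral.continuousOn_primitive_interval' hfint left_mem_uIcc 0 left_mem_uIcc
    rw [ContinuousWithinAt, intervalIntegral.integral_same, uIcc_of_le hT.le] at hcont
    simpa using (hcont.mono_left (nhdsWithin_le_of_mem
      (mem_of_superset (Ioc_mem_nhdsGT hT) Ioc_subset_Icc_self))).const_mul M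
  refine squeeze_zero_norm' ?_ hprim
  filter_upwards [Ioc_mem_nhdsGT hT] with x hx
  rw [halfLineConv_comm, halfLineConv, intervalIntegral_eq_setIntegral_Ioo hx.1.le,
    ← integral_const_mul]
  refine norm_integral_le_of_norm_le ((hf.abs.integrableOn.mono_set
    (Ioo_subset_Ioc_self.trans (Ioc_subset_Ioc_right hx.2))).const_mul M) ?_
  filter_upwards [ae_restrict_mem measurableSet_Ioo] with s hs
  rw [norm_mul]
  exact mul_le_mul_of_nonneg_right (hM _ ⟨sub_pos.2 hs.2, by linarith [hs.1, hx.2]⟩) (abs_nonneg _)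

lemma monotoneOn_conv (hf : WeaklySingular T f) (hg : WeaklySingular T g)
    (hf₀ : ∀ t ∈ Ioc 0 T, 0 ≤ f t) (hg₀ : ∀ t ∈ Ioc 0 T, 0 ≤ g t) (hmono : MonotoneOn g (Ioc 0 T)) :
    MonotoneOn (f ∗₊ g) (Ioc 0 T) := by
  intro x hx y hy hxy
  rw [halfLineConv_comm]
  have hmem {z s : ℝ} (hz : z ∈ Ioc 0 T) (hs : s ∈ Ioo 0 z) : s ∈ Ioc 0 T ∧ z - s ∈ Ioc 0 T :=
    ⟨⟨hs.1, hs.2.le.trans hz.2⟩, sub_pos.2 hs.2, by linarith [hs.1, hz.2]⟩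
  have hinty := hg.integrableOn_conv hf hy
  have hsub : Ioo 0 x ⊆ Ioo 0 y := Ioo_subset_Ioo_right hxy
  calc (g ∗₊ f) x ≤ ∫ s in Ioo 0 x, g (y - s) * f s :=
        setIntegral_mono_on (hg.integrableOn_conv hf hx) (hinty.mono_set hsub) measurableSet_Ioo
          fun s hs => mul_le_mul_of_nonneg_right
            (hmono (hmem hx hs).2 (hmem hy (hsub hs)).2 (sub_le_sub_right hxy s))
            (hf₀ s (hmem hx hs).1)
    _ ≤ (g ∗₊ f) y := setIntegral_mono_set hinty
        ((ae_restrict_iff' measurableSet_Ioo).2 (.of_forall fun s hs =>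
          mul_nonneg (hg₀ _ (hmem hy hs).2) (hf₀ s (hmem hy hs).1))) hsub.eventuallyLE

lemma nonneg_of_monotoneOn_integral (hf : WeaklySingular T f)
    (hmono : MonotoneOn (rlKernel 1 ∗₊ f) (Ioc 0 T)) : ∀ t ∈ Ioc 0 T, 0 ≤ f t := by
  intro t ht
  have hsub : Ioc 0 t ⊆ Ioc 0 T := Ioc_subset_Ioc_right ht.2
  have hcont := hf.continuousOn.mono hsub
  have hmeas := hcont.stronglyMeasurableAtFilter_nhdsWithin (μ := volume) measurableSet_Ioc t
  have hcontt := hcont t ⟨ht.1, le_rfl⟩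
  rw [nhdsWithin_Ioc_eq_nhdsLE ht.1] at hmeas
  rw [ContinuousWithinAt, nhdsWithin_Ioc_eq_nhdsLE ht.1] at hcontt
  have hint : IntervalIntegrable f volume 0 t :=
    (intervalIntegrable_iff_integrableOn_Ioc_of_le ht.1.le).2 (hf.integrableOn.mono_set hsub)
  have hderiv := (intervalIntegral.integral_hasDerivWithinAt_right (s := Iic t) (t := Iic t) hint
    hmeas hcontt).mono (Ioc_subset_Iic_self (a := 0))
  refine hderiv.nonneg_of_monotoneOn ?_
    ((hmono.mono hsub).congr fun s hs => rlKernel_one_conv hs.1.le)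
  rw [accPt_principal_iff_nhdsWithin, Ioc_sdiff_right, nhdsWithin_Ioo_eq_nhdsLT ht.1]
  infer_instance

lemma monotoneOn_integral_sub (hρ : WeaklySingular T ρ) (hJ : ContinuousOn J (Ioc 0 T))
    (hJ' : ∀ t ∈ Ioo 0 T, HasDerivWithinAt J (J' t) (Ioi t) t) (hle : ∀ t ∈ Ioo 0 T, J' t ≤ ρ t) :
    MonotoneOn (rlKernel 1 ∗₊ ρ - J) (Ioc 0 T) := by
  intro x hx y hy hxy
  have hIcc : Icc x y ⊆ Ioc 0 T := Icc_subset_Ioc hx.1 hy.2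
  have hIoo : Ioo x y ⊆ Ioo 0 T := Ioo_subset_Ioo hx.1.le hy.2
  have hρint {z : ℝ} (hz : z ∈ Ioc 0 T) : IntervalIntegrable ρ volume 0 z :=
    (intervalIntegrable_iff_integrableOn_Ioc_of_le hz.1.le).2
      (hρ.integrableOn.mono_set (Ioc_subset_Ioc_right hz.2))
  have hgrowth := intervalIntegral.sub_le_integral_of_hasDeriv_right_of_le hxy (hJ.mono hIcc)
    (fun t ht => hJ' t (hIoo ht)) (hρ.integrableOn.mono_set hIcc) fun t ht => hle t (hIoo ht)
  rw [← intervalIntegral.integral_interval_sub_left (hρint hy) (hρint hx),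
    ← rlKernel_one_conv hx.1.le, ← rlKernel_one_conv hy.1.le] at hgrowth
  simp only [Pi.sub_apply]
  linarith

end WeaklySingular

lemma nonneg_of_monotoneOn_of_tendsto_zero (hmono : MonotoneOn f (Ioc 0 T))
    (hlim : Tendsto f (𝓝[>] 0) (𝓝 0)) : ∀ t ∈ Ioc 0 T, 0 ≤ f t := fun _ ht =>
  le_of_tendsto hlim <| mem_of_superset (Ioc_mem_nhdsGT ht.1) fun _ hs =>
    hmono ⟨hs.1, hs.2.trans ht.2⟩ ht hs.2

lemma mittagLefflerKernel_conv_rlKernel_conv (hα : α ∈ Ioo 0 1) (hφ : WeaklySingular T φ)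
    (hx : x ∈ Ioc 0 T) :
    (mittagLefflerKernel α c α ∗₊ (rlKernel (1 - α) ∗₊ φ)) x =
      (rlKernel 1 ∗₊ (φ + c • (mittagLefflerKernel α c α ∗₊ φ))) x := by
  set S := mittagLefflerKernel α c α
  have hS : WeaklySingular T S := weaklySingular_mittagLefflerKernel c hα.1 hα.1 T
  have hk := weaklySingular_rlKernel (sub_pos.2 hα.2) T
  have hone : WeaklySingular T (rlKernel 1) := weaklySingular_rlKernel one_pos T
  have hkernel : ∀ t > 0, (rlKernel (1 - α) ∗₊ S) t = rlKernel 1 t + c * (rlKernel 1 ∗₊ S) t := by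
    intro t ht
    rw [rlKernel_conv_mittagLefflerKernel c hα.1 (sub_pos.2 hα.2) hα.1 ht, sub_add_cancel,
      mittagLefflerKernel_eq_add c hα.1 one_pos ht,
      rlKernel_conv_mittagLefflerKernel c hα.1 one_pos hα.1 ht]
  calc (S ∗₊ (rlKernel (1 - α) ∗₊ φ)) x
      = (rlKernel (1 - α) ∗₊ S ∗₊ φ) x := by
        rw [← hS.conv_assoc hk hφ hx, halfLineConv_comm S]
    _ = (φ ∗₊ (rlKernel 1 + c • (rlKernel 1 ∗₊ S))) x := by
        rw [halfLineConv_comm]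
        exact halfLineConv_congr (fun _ _ => rfl) fun _ ht => hkernel _ ht.1
    _ = (φ ∗₊ rlKernel 1) x + c * (φ ∗₊ (rlKernel 1 ∗₊ S)) x := by
        rw [hφ.conv_add hone ((hone.halfLineConv hS).smul c) hx, halfLineConv_smul, Pi.smul_apply,
          smul_eq_mul]
    _ = (rlKernel 1 ∗₊ (φ + c • (S ∗₊ φ))) x := by
        rw [hone.conv_add hφ ((hS.halfLineConv hφ).smul c) hx, halfLineConv_smul, Pi.smul_apply,
          smul_eq_mul, halfLineConv_comm φ, halfLineConv_comm φ, hone.conv_assoc hS hφ hx]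

lemma mittagLefflerKernel_conv_rlKernel_one_conv_sub (hα : α ∈ Ioo 0 1) (hφ : WeaklySingular T φ)
    (hr : WeaklySingular T r) (hx : x ∈ Ioc 0 T) :
    (mittagLefflerKernel α c α ∗₊ (rlKernel 1 ∗₊ (r + c • φ) - rlKernel (1 - α) ∗₊ φ)) x =
      (rlKernel 1 ∗₊ (mittagLefflerKernel α c α ∗₊ r - φ)) x := by
  set S := mittagLefflerKernel α c α
  have hS : WeaklySingular T S := weaklySingular_mittagLefflerKernel c hα.1 hα.1 T
  have hk := weaklySingular_rlKernel (sub_pos.2 hα.2) T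
  have hone : WeaklySingular T (rlKernel 1) := weaklySingular_rlKernel one_pos T
  have hρ := hr.add (hφ.smul c)
  have hSφ := (hS.halfLineConv hφ).smul c
  have hsource : EqOn (S ∗₊ (r + c • φ) - (φ + c • (S ∗₊ φ))) (S ∗₊ r - φ) (Ioc 0 T) := by
    intro t ht
    simp only [Pi.sub_apply, Pi.add_apply, Pi.smul_apply, smul_eq_mul,
      hS.conv_add hr (hφ.smul c) ht, halfLineConv_smul]
    ring
  calc (S ∗₊ (rlKernel 1 ∗₊ (r + c • φ) - rlKernel (1 - α) ∗₊ φ)) x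
      = (rlKernel 1 ∗₊ (S ∗₊ (r + c • φ) - (φ + c • (S ∗₊ φ)))) x := by
        rw [hS.conv_sub (hone.halfLineConv hρ) (hk.halfLineConv hφ) hx,
          hS.conv_left_comm hone hρ hx, mittagLefflerKernel_conv_rlKernel_conv hα hφ hx,
          ← hone.conv_sub (hS.halfLineConv hρ) (hφ.add hSφ) hx]
    _ = (rlKernel 1 ∗₊ (S ∗₊ r - φ)) x :=
        halfLineConv_congr (fun _ _ => rfl) fun t ht =>
          hsource ⟨ht.1, ht.2.le.trans hx.2⟩

lemma monotoneOn_rlKernel_one_conv_sub (hα : α ∈ Ioo 0 1) (hφ : ContinuousOn φ (Icc 0 T))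
    (hφ_lip : ∀ t ∈ Ioo 0 T, (fun s => φ s - φ t) =O[𝓝 t] fun s => s - t)
    (hρ : WeaklySingular T ρ) (hle : ∀ t ∈ Ioo 0 T, marchaudDeriv α φ t ≤ ρ t) :
    MonotoneOn (rlKernel 1 ∗₊ ρ - rlKernel (1 - α) ∗₊ φ) (Ioc 0 T) :=
  hρ.monotoneOn_integral_sub
    ((weaklySingular_rlKernel (sub_pos.2 hα.2) T).halfLineConv (.of_continuousOn hφ)).continuousOn
    (fun t ht => hasDerivWithinAt_rlKernel_conv_marchaudDeriv hα hφ (hφ_lip t ht) ht) hle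

lemma tendsto_rlKernel_one_conv_sub (hT : 0 < T) (hα : α < 1) (hφ : ContinuousOn φ (Icc 0 T))
    (hρ : WeaklySingular T ρ) :
    Tendsto (rlKernel 1 ∗₊ ρ - rlKernel (1 - α) ∗₊ φ) (𝓝[>] 0) (𝓝 0) := by
  obtain ⟨M, hM⟩ := isCompact_Icc.exists_bound_of_continuousOn hφ
  have hρ_lim := hρ.tendsto_conv_zero (g := rlKernel 1) (M := 1) hT fun s _ => by
    simp [rlKernel_one]
  have hφ_lim := (weaklySingular_rlKernel (sub_pos.2 hα) T).tendsto_conv_zero hT fun s hs =>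
    hM s (Ioc_subset_Icc_self hs)
  rw [halfLineConv_comm] at hρ_lim
  have hlim := hρ_lim.sub hφ_lim
  rwa [sub_zero] at hlim

lemma WeaklySingular.of_integrableOn_conv (hT : 0 < T) (hf : ContinuousOn f (Ioc 0 T))
    (hf₀ : ∀ t ∈ Ioc 0 T, f t ≠ 0) (hg : ContinuousOn g (Ioc 0 T))
    (hfg : IntegrableOn (fun s => f (T - s) * g s) (Ioo 0 T)) : WeaklySingular T g where
  continuousOn := hg
  integrableOn := by
    have hmem : ∀ s ∈ Icc 0 (T / 2), T - s ∈ Ioc 0 T := fun s hs =>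
      ⟨by linarith [hs.2], by linarith [hs.1]⟩
    have hinv : ContinuousOn (fun s => (f (T - s))⁻¹) (Icc 0 (T / 2)) :=
      (hf.comp (by fun_prop) hmem).inv₀ fun s hs => hf₀ _ (hmem s hs)
    have hnear : IntegrableOn g (Icc 0 (T / 2)) := by
      have hfg' : IntegrableOn (fun s => f (T - s) * g s) (Icc 0 (T / 2)) := by
        rw [integrableOn_Icc_iff_integrableOn_Ioo]
        exact hfg.mono_set (Ioo_subset_Ioo_right (half_le_self hT.le))
      refine (hfg'.continuousOn_mul hinv isCompact_Icc).congr_fun (fun s hs => ?_) measurableSet_Icc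
      exact inv_mul_cancel_left₀ (hf₀ _ (hmem s hs)) _
    have hfar : IntegrableOn g (Icc (T / 2) T) :=
      (hg.mono (Icc_subset_Ioc (half_pos hT) le_rfl)).integrableOn_Icc
    refine (hnear.union hfar).mono_set ?_
    rw [Icc_union_Icc_eq_Icc (half_pos hT).le (half_le_self hT.le)]
    exact Ioc_subset_Icc_self

lemma weaklySingular_of_integrableOn_mittagLefflerKernel_conv (hα : α ∈ Ioo 0 1) (hT : 0 < T)
    (hg : ContinuousOn g (Ioc 0 T))
    (hint : IntegrableOn (fun s => mittagLefflerKernel α c α (T - s) * g s) (Ioo 0 T)) :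
    WeaklySingular T g :=
  .of_integrableOn_conv hT (weaklySingular_mittagLefflerKernel c hα.1 hα.1 T).continuousOn
    (fun _ ht => (mittagLefflerKernel_pos hα ht.1).ne') hg hint

lemma isBigO_sub_of_forall_lipschitzOnWith_Icc
    (hf : ∀ ε ∈ Ioo 0 T, ∃ K : NNReal, LipschitzOnWith K f (Icc ε T)) :
    ∀ t ∈ Ioo 0 T, (fun s => f s - f t) =O[𝓝 t] fun s => s - t := by
  intro t ht
  obtain ⟨K, hK⟩ := hf (t / 2) ⟨half_pos ht.1, (half_lt_self ht.1).trans ht.2⟩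
  have hnhds : Icc (t / 2) T ∈ 𝓝 t := Icc_mem_nhds (half_lt_self ht.1) ht.2
  exact .of_bound K <| mem_of_superset hnhds fun _ hs => hK.norm_sub_le hs (mem_of_mem_nhds hnhds)

theorem scalar_comparison_principle_general (hα : α ∈ Ioo 0 1) (hφ : ContinuousOn φ (Icc 0 T))
    (hφ_lip : ∀ t ∈ Ioo 0 T, (fun s => φ s - φ t) =O[𝓝 t] fun s => s - t)
    (hr : WeaklySingular T r) (hineq : ∀ t ∈ Ioo 0 T, marchaudDeriv α φ t + lam * φ t ≤ r t) :
    ∀ t ∈ Ioc 0 T, φ t ≤ (mittagLefflerKernel α (-lam) α ∗₊ r) t := by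
  intro t ht
  set S := mittagLefflerKernel α (-lam) α
  have hS : WeaklySingular T S := weaklySingular_mittagLefflerKernel _ hα.1 hα.1 T
  have hφ_sing : WeaklySingular T φ := .of_continuousOn hφ
  have hρ : WeaklySingular T (r + -lam • φ) := hr.add (hφ_sing.smul _)
  have hk := weaklySingular_rlKernel (sub_pos.2 hα.2) T
  have hmono := monotoneOn_rlKernel_one_conv_sub hα hφ hφ_lip hρ fun s hs => by
    simpa [← sub_eq_add_neg] using le_sub_iff_add_le.2 (hineq s hs)
  have hnonneg := nonneg_of_monotoneOn_of_tendsto_zero hmono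
    (tendsto_rlKernel_one_conv_sub (ht.1.trans_le ht.2) hα.2 hφ hρ)
  have hconv_mono := hS.monotoneOn_conv
    (((weaklySingular_rlKernel one_pos T).halfLineConv hρ).sub (hk.halfLineConv hφ_sing))
    (fun s hs => (mittagLefflerKernel_pos hα hs.1).le) hnonneg hmono
  have hgap := ((hS.halfLineConv hr).sub hφ_sing).nonneg_of_monotoneOn_integral
    (hconv_mono.congr fun s hs =>
      mittagLefflerKernel_conv_rlKernel_one_conv_sub hα hφ_sing hr hs) t ht
  exact sub_nonneg.1 hgap

end Comparison

/-- Scalar comparison principle: if `(D_t^α + λ)φ ≤ r` (Caputo derivative in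
integrated-by-parts form) with `φ(0) = 0`, then `φ ≤ (D_t^α + λ)⁻¹ r`, where
`(D_t^α + λ)⁻¹ r (t) = ∫_0^t (t-s)^(α-1) E_{α,α}(-λ(t-s)^α) r(s) ds`. -/
theorem scalar_comparison_principle
    (α lam T : ℝ) (hα : α ∈ Set.Ioo (0 : ℝ) 1) (hT : 0 < T)
    (φ r : ℝ → ℝ)
    (hφ_cont : ContinuousOn φ (Set.Icc 0 T))
    (hφ_nonneg : ∀ t ∈ Set.Icc 0 T, 0 ≤ φ t)
    (hφ0 : φ 0 = 0)
    (hφ_lip : ∀ ε ∈ Set.Ioo 0 T, ∃ K : NNReal, LipschitzOnWith K φ (Set.Icc ε T))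
    (hr_nonneg : ∀ t ∈ Set.Ioc 0 T, 0 ≤ r t)
    (hr_cont : ContinuousOn r (Set.Ioc 0 T))
    (hr_int : ∀ t ∈ Set.Ioc 0 T,
      IntegrableOn (fun s => (t - s) ^ (α - 1) * mittagLeffler α α (-lam * (t - s) ^ α) * r s)
        (Set.Ioo 0 t))
    (hineq : ∀ t ∈ Set.Ioc 0 T,
      (1 / Real.Gamma (1 - α)) * (t ^ (-α) * φ t
          + ∫ s in Set.Ioo 0 t, α * (t - s) ^ (-α - 1) * (φ t - φ s))
        + lam * φ t ≤ r t) :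
    ∀ t ∈ Set.Ioc 0 T,
      φ t ≤ ∫ s in Set.Ioo 0 t,
        (t - s) ^ (α - 1) * mittagLeffler α α (-lam * (t - s) ^ α) * r s := by
  have hr := weaklySingular_of_integrableOn_mittagLefflerKernel_conv hα hT hr_cont
    (hr_int T ⟨hT, le_rfl⟩)
  exact scalar_comparison_principle_general hα hφ_cont
    (isBigO_sub_of_forall_lipschitzOnWith_Icc hφ_lip) hr fun t ht =>
      hineq t (Ioo_subset_Ioc_self ht)
end
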